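/- Let Γ^{sb} = (K, I, J, q, g) be a commutative state-blind repeated game with K, I, J finite and nonempty. Then for every initial probability p₁ ∈ Δ(K) the game Γ^{sb}(p₁) has a uniform value. -/

import Mathlib

open Filter Topology

noncomputable section

/-- The affine extension of a transition `q : K → I → J → Δ(K)` to beliefs `p : K → ℝ`. -/
def qTilde {K I J : Type*} [Fintype K]
    (q : K → I → J → K → ℝ) (p : K → ℝ) (i : I) (j : J) : K → ℝ :=
  fun k' => ∑ k : K, p k * q k i j k'

/-- The affine extension of the payoff `g` to beliefs. -/
def gTilde {K I J : Type*} [Fintype K]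
    (g : K → I → J → ℝ) (p : K → ℝ) (i : I) (j : J) : ℝ :=
  ∑ k : K, p k * g k i j

/-- Expected total payoff over `n` stages of the state-blind repeated game, when players use the
behavioral strategies `σ` and `τ` (which observe only past action pairs), the current belief is
`p` and the past history is `h`. -/
def expPaySB {K I J : Type*} [Fintype K] [Fintype I] [Fintype J]
    (q : K → I → J → K → ℝ) (g : K → I → J → ℝ)
    (σ : List (I × J) → PMF I) (τ : List (I × J) → PMF J) :
    ℕ → (K → ℝ) → List (I × J) → ℝ
  | 0, _, _ => 0
  | n + 1, p, h => ∑ i : I, ∑ j : J, ((σ h) i).toReal * ((τ h) j).toReal *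
      (gTilde g p i j + expPaySB q g σ τ n (qTilde q p i j) (h ++ [(i, j)]))

/-- The `n`-stage average expected payoff `γ_n(p₁, σ, τ)` of the state-blind repeated game. -/
def sbPayoff {K I J : Type*} [Fintype K] [Fintype I] [Fintype J]
    (q : K → I → J → K → ℝ) (g : K → I → J → ℝ)
    (σ : List (I × J) → PMF I) (τ : List (I × J) → PMF J) (p₁ : K → ℝ) (n : ℕ) : ℝ :=
  (1 / (n : ℝ)) * expPaySB q g σ τ n p₁ []

/-!
Because the transitions commute, the belief after a history depends only on how many times each
pair of actions was played: it is `p₁` times a product of powers of commuting stochastic matrices,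
one for each pair. The powers of a stochastic matrix are asymptotically periodic, so up to `ε` each
exponent can be reduced to a finite range in a way compatible with adding one, and the belief is
tracked by a finite automaton driven by the actions. The game played on the automaton is a
stochastic game with deterministic transitions and public states.

By Attia and Oliu-Barton, the discounted value of that game is located by the sign of the value of
a matrix game whose entries are polynomial in the discount rate and in the candidate value;
Fourier–Motzkin elimination turns this sign condition into finitely many polynomial sign
conditions, so the discounted value and the rate are related by a nonzero bivariate polynomial.
Almost every level is then attained a bounded number of times, hence the discounted value has
bounded variation in the rate and moves slowly along a suitable sequence of rates with small sum.
As in Mertens and Neyman, a player who plays optimally at the rate indexed by a counter of past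
payoffs guarantees, up to a multiple of `ε`, the discounted value for a small rate. The automaton
only needs to see the actions, so each player can run it in the state-blind game.
-/

/-! ### Matrix games -/

section Averages

variable {ι R : Type*} [Fintype ι] [CommRing R] [PartialOrder R]

theorem dotProduct_const_of_mem_stdSimplex {x : ι → R} (hx : x ∈ stdSimplex R ι) (c : R) :
    (x ⬝ᵥ fun _ => c) = c := by
  rw [dotProduct, ← Finset.sum_mul, hx.2, one_mul]

variable [IsOrderedRing R]

theorem le_dotProduct_of_mem_stdSimplex {x f : ι → R} {c : R} (hx : x ∈ stdSimplex R ι)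
    (h : ∀ i, c ≤ f i) : c ≤ x ⬝ᵥ f :=
  calc c = x ⬝ᵥ fun _ => c := (dotProduct_const_of_mem_stdSimplex hx c).symm
    _ ≤ x ⬝ᵥ f := dotProduct_le_dotProduct_of_nonneg_left h hx.1

theorem dotProduct_le_of_mem_stdSimplex {x f : ι → R} {c : R} (hx : x ∈ stdSimplex R ι)
    (h : ∀ i, f i ≤ c) : x ⬝ᵥ f ≤ c :=
  calc x ⬝ᵥ f ≤ x ⬝ᵥ fun _ => c := dotProduct_le_dotProduct_of_nonneg_left h hx.1
    _ = c := dotProduct_const_of_mem_stdSimplex hx c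

end Averages

section MatrixGame

open Matrix

variable {I J : Type*} [Fintype I] [Fintype J]

/-- `v` is the value of the zero-sum matrix game `A`, in which player 1 chooses the row and
maximizes: some mixed action of player 1 guarantees `v`, and so does some mixed action of
player 2. -/
def IsMatrixGameValue (A : Matrix I J ℝ) (v : ℝ) : Prop :=
  ∃ x ∈ stdSimplex ℝ I, ∃ y ∈ stdSimplex ℝ J, (∀ j, v ≤ (x ᵥ* A) j) ∧ ∀ i, (A *ᵥ y) i ≤ v

theorem exists_isMatrixGameValue [Nonempty I] [Nonempty J] (A : Matrix I J ℝ) :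
    ∃ v, IsMatrixGameValue A v := by
  classical
  obtain ⟨y, hy, x, hx, saddle⟩ :=
    Sion.exists_isSaddlePointOn (f := fun (y : J → ℝ) (x : I → ℝ) => x ⬝ᵥ A *ᵥ y)
      (isPathConnected_stdSimplex J).nonempty (convex_stdSimplex ℝ J) (isCompact_stdSimplex ℝ J)
      (fun x _ => (by fun_prop : Continuous fun y : J → ℝ =>
        x ⬝ᵥ A *ᵥ y).lowerSemicontinuous.lowerSemicontinuousOn _)
      (fun x _ => ((dotProductBilin ℝ ℝ x ∘ₗ A.mulVecLin).convexOn
        (convex_stdSimplex ℝ J)).quasiconvexOn)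
      (convex_stdSimplex ℝ I) (isPathConnected_stdSimplex I).nonempty (isCompact_stdSimplex ℝ I)
      (fun y _ => (by fun_prop : Continuous fun x : I → ℝ =>
        x ⬝ᵥ A *ᵥ y).upperSemicontinuous.upperSemicontinuousOn _)
      (fun y _ => (((dotProductBilin ℝ ℝ).flip (A *ᵥ y)).concaveOn
        (convex_stdSimplex ℝ I)).quasiconcaveOn)
  refine ⟨x ⬝ᵥ A *ᵥ y, x, hx, y, hy, fun j => ?_, fun i => ?_⟩
  · exact (saddle _ (single_mem_stdSimplex ℝ j) x hx).trans_eq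
      (congrArg (x ⬝ᵥ ·) (mulVec_single_one A j))
  · simpa using saddle y hy _ (single_mem_stdSimplex ℝ i)

theorem IsMatrixGameValue.le_add {A B : Matrix I J ℝ} {v w c : ℝ} (hA : IsMatrixGameValue A v)
    (hB : IsMatrixGameValue B w) (hAB : ∀ i j, A i j ≤ B i j + c) : v ≤ w + c := by
  obtain ⟨x, hx, -, -, hxA, -⟩ := hA
  obtain ⟨-, -, y, hy, -, hyB⟩ := hB
  calc v ≤ y ⬝ᵥ (x ᵥ* A) := le_dotProduct_of_mem_stdSimplex hy hxA
    _ = x ⬝ᵥ (A *ᵥ y) := by rw [dotProduct_comm, dotProduct_mulVec]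
    _ ≤ w + c := dotProduct_le_of_mem_stdSimplex hx fun i => ?_
  have : (A *ᵥ y) i - c ≤ w := by
    refine le_trans ?_ (hyB i)
    rw [sub_le_iff_le_add]
    calc (A *ᵥ y) i = y ⬝ᵥ A i := dotProduct_comm _ _
      _ ≤ y ⬝ᵥ (B i + fun _ => c) := dotProduct_le_dotProduct_of_nonneg_left (hAB i) hy.1
      _ = (B *ᵥ y) i + c := by
        rw [dotProduct_add, dotProduct_const_of_mem_stdSimplex hy, dotProduct_comm, mulVec]
  linarith

theorem IsMatrixGameValue.unique {A : Matrix I J ℝ} {v w : ℝ} (hv : IsMatrixGameValue A v)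
    (hw : IsMatrixGameValue A w) : v = w :=
  le_antisymm (by simpa using hv.le_add hw (c := 0) (by simp))
    (by simpa using hw.le_add hv (c := 0) (by simp))

/-- Exchanging the players and replacing every payoff `a` by `c - a`. -/
theorem IsMatrixGameValue.transpose_const_sub {A : Matrix I J ℝ} {v : ℝ}
    (h : IsMatrixGameValue A v) (c : ℝ) :
    IsMatrixGameValue (of fun j i => c - A i j) (c - v) := by
  obtain ⟨x, hx, y, hy, hxA, hyA⟩ := h
  refine ⟨y, hy, x, hx, fun i => ?_, fun j => ?_⟩
  · have : (y ᵥ* of fun j i => c - A i j) i = (y ⬝ᵥ fun _ => c) - y ⬝ᵥ A i :=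
      dotProduct_sub y (fun _ => c) (A i)
    rw [this, dotProduct_const_of_mem_stdSimplex hy, dotProduct_comm]
    exact sub_le_sub_left (hyA i) c
  · have : ((of fun j i => c - A i j) *ᵥ x) j = ((fun _ => c) ⬝ᵥ x) - (fun i => A i j) ⬝ᵥ x :=
      sub_dotProduct (fun _ => c) (fun i => A i j) x
    rw [this, dotProduct_comm, dotProduct_const_of_mem_stdSimplex hx, dotProduct_comm]
    exact sub_le_sub_left (hxA j) c

theorem IsMatrixGameValue.mem_Icc [Nonempty I] [Nonempty J] {A : Matrix I J ℝ} {v a b : ℝ}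
    (h : IsMatrixGameValue A v) (hA : ∀ i j, A i j ∈ Set.Icc a b) : v ∈ Set.Icc a b := by
  obtain ⟨x, hx, y, hy, hxA, hyA⟩ := h
  have i := Classical.arbitrary I
  have j := Classical.arbitrary J
  refine ⟨le_trans ?_ (hyA i), (hxA j).trans ?_⟩
  · rw [mulVec, dotProduct_comm]
    exact le_dotProduct_of_mem_stdSimplex hy fun j => (hA i j).1
  · exact dotProduct_le_of_mem_stdSimplex hx fun i => (hA i j).2

variable [Nonempty I] [Nonempty J]

/-- The value of the zero-sum matrix game `A`. -/
def matrixGameValue (A : Matrix I J ℝ) : ℝ := (exists_isMatrixGameValue A).choose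

theorem isMatrixGameValue_matrixGameValue (A : Matrix I J ℝ) :
    IsMatrixGameValue A (matrixGameValue A) :=
  (exists_isMatrixGameValue A).choose_spec

theorem IsMatrixGameValue.matrixGameValue_eq {A : Matrix I J ℝ} {v : ℝ}
    (h : IsMatrixGameValue A v) : matrixGameValue A = v :=
  (isMatrixGameValue_matrixGameValue A).unique h

theorem abs_matrixGameValue_sub_le {A B : Matrix I J ℝ} {c : ℝ}
    (h : ∀ i j, |A i j - B i j| ≤ c) : |matrixGameValue A - matrixGameValue B| ≤ c := by
  have hA := isMatrixGameValue_matrixGameValue A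
  have hB := isMatrixGameValue_matrixGameValue B
  have h' (i j) := abs_le.1 (h i j)
  rw [abs_sub_le_iff, sub_le_iff_le_add', sub_le_iff_le_add']
  exact ⟨hA.le_add hB fun i j => by linarith [h' i j], hB.le_add hA fun i j => by
    linarith [h' i j]⟩

end MatrixGame

/-! ### Discounted deterministic games -/

/-- A zero-sum stochastic game with deterministic transitions, publicly known state and
payoffs in `[0, 1]`; player 1 maximizes. -/
structure DeterministicGame (S I J : Type*) where
  /-- The successor of a state under a pair of actions. -/
  next : S → I → J → S
  /-- The stage payoff of player 1. -/
  reward : S → I → J → ℝ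
  reward_mem : ∀ s i j, reward s i j ∈ Set.Icc (0 : ℝ) 1

namespace DeterministicGame

open Matrix

variable {S I J : Type*} (G : DeterministicGame S I J)

/-- The game seen by player 2: the players exchange roles and payoffs become `1 - reward`. -/
def swap : DeterministicGame S J I where
  next s j i := G.next s i j
  reward s j i := 1 - G.reward s i j
  reward_mem s j i := ⟨sub_nonneg.2 (G.reward_mem s i j).2, sub_le_self _ (G.reward_mem s i j).1⟩

/-- The one-shot game at state `s` in which the stage payoff has weight `l` and the continuation
payoff `v` has weight `1 - l`. -/
def auxMatrix (l : ℝ) (v : S → ℝ) (s : S) : Matrix I J ℝ :=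
  of fun i j => l * G.reward s i j + (1 - l) * v (G.next s i j)

theorem swap_auxMatrix (l : ℝ) (v : S → ℝ) (s : S) :
    G.swap.auxMatrix l (1 - v) s = of fun j i => 1 - G.auxMatrix l v s i j := by
  ext j i
  simp only [auxMatrix, swap, of_apply, Pi.sub_apply, Pi.one_apply]
  ring

variable [Fintype I] [Nonempty I] [Fintype J] [Nonempty J]

/-- The Shapley operator of the `l`-discounted game. -/
def shapley (l : ℝ) (v : S → ℝ) (s : S) : ℝ := matrixGameValue (G.auxMatrix l v s)

theorem swap_shapley (l : ℝ) (v : S → ℝ) : G.swap.shapley l (1 - v) = 1 - G.shapley l v := by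
  ext s
  rw [shapley, swap_auxMatrix]
  exact ((isMatrixGameValue_matrixGameValue _).transpose_const_sub 1).matrixGameValue_eq

theorem shapley_mem_Icc {l : ℝ} (hl : l ∈ Set.Ioo (0 : ℝ) 1) {v : S → ℝ}
    (hv : v ∈ Set.Icc (0 : S → ℝ) 1) : G.shapley l v ∈ Set.Icc (0 : S → ℝ) 1 := by
  suffices ∀ s, G.shapley l v s ∈ Set.Icc (0 : ℝ) 1 from
    ⟨fun s => (this s).1, fun s => (this s).2⟩
  exact fun s => (isMatrixGameValue_matrixGameValue _).mem_Icc fun i j =>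
    convex_Icc (0 : ℝ) 1 (G.reward_mem s i j) ⟨hv.1 _, hv.2 _⟩ hl.1.le (sub_nonneg.2 hl.2.le)
      (add_sub_cancel l 1)

variable [Fintype S]

theorem contractingWith_shapley {l : ℝ} (hl : l ∈ Set.Ioo (0 : ℝ) 1) :
    ContractingWith (1 - l).toNNReal (G.shapley l) := by
  refine ⟨Real.toNNReal_lt_one.2 (sub_lt_self 1 hl.1), LipschitzWith.of_dist_le_mul fun v w => ?_⟩
  have hl' : 0 ≤ 1 - l := sub_nonneg.2 hl.2.le
  rw [Real.coe_toNNReal _ hl', dist_pi_le_iff (mul_nonneg hl' dist_nonneg)]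
  refine fun s => abs_matrixGameValue_sub_le fun i j => ?_
  simp only [auxMatrix, of_apply, add_sub_add_left_eq_sub, ← mul_sub, abs_mul, abs_of_nonneg hl']
  exact mul_le_mul_of_nonneg_left (dist_le_pi_dist v w _) hl'

theorem dist_shapley_le {v : S → ℝ} (hv : v ∈ Set.Icc (0 : S → ℝ) 1) (l m : ℝ) :
    dist (G.shapley l v) (G.shapley m v) ≤ |l - m| := by
  refine (dist_pi_le_iff (abs_nonneg _)).2 fun s => abs_matrixGameValue_sub_le fun i j => ?_
  have hdiff : G.auxMatrix l v s i j - G.auxMatrix m v s i j =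
      (l - m) * (G.reward s i j - v (G.next s i j)) := by
    simp only [auxMatrix, of_apply]
    ring
  rw [hdiff, abs_mul]
  refine mul_le_of_le_one_right (abs_nonneg _) ?_
  simpa using abs_sub_le_of_le_of_le (G.reward_mem s i j).1 (G.reward_mem s i j).2 (hv.1 _) (hv.2 _)

open Classical in
/-- The value of the `l`-discounted game as a function of the initial state, for `0 < l < 1`;
it is `0` for any other `l`. -/
def discountedValue (l : ℝ) : S → ℝ :=
  if hl : l ∈ Set.Ioo (0 : ℝ) 1 then (G.contractingWith_shapley hl).fixedPoint else 0

variable {l m : ℝ}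

theorem shapley_discountedValue (hl : l ∈ Set.Ioo (0 : ℝ) 1) :
    G.shapley l (G.discountedValue l) = G.discountedValue l := by
  rw [discountedValue, dif_pos hl]
  exact (G.contractingWith_shapley hl).fixedPoint_isFixedPt

theorem eq_discountedValue (hl : l ∈ Set.Ioo (0 : ℝ) 1) {v : S → ℝ} (hv : G.shapley l v = v) :
    v = G.discountedValue l :=
  (G.contractingWith_shapley hl).fixedPoint_unique' hv (G.shapley_discountedValue hl)

theorem isMatrixGameValue_discountedValue (hl : l ∈ Set.Ioo (0 : ℝ) 1) (s : S) :
    IsMatrixGameValue (G.auxMatrix l (G.discountedValue l) s) (G.discountedValue l s) := by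
  conv => arg 2; rw [← G.shapley_discountedValue hl]
  exact isMatrixGameValue_matrixGameValue _

theorem swap_discountedValue (hl : l ∈ Set.Ioo (0 : ℝ) 1) :
    G.swap.discountedValue l = 1 - G.discountedValue l := by
  refine (G.swap.eq_discountedValue hl ?_).symm
  rw [swap_shapley, shapley_discountedValue G hl]

theorem discountedValue_mem_Icc (hl : l ∈ Set.Ioo (0 : ℝ) 1) :
    G.discountedValue l ∈ Set.Icc (0 : S → ℝ) 1 := by
  have hc := G.contractingWith_shapley hl
  rw [← G.eq_discountedValue hl hc.fixedPoint_isFixedPt]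
  have hmaps : Set.MapsTo (G.shapley l) (Set.Icc 0 1) (Set.Icc 0 1) :=
    fun v hv => G.shapley_mem_Icc hl hv
  exact isClosed_Icc.mem_of_tendsto (hc.tendsto_iterate_fixedPoint 0) <|
    Eventually.of_forall fun n => hmaps.iterate n (Set.left_mem_Icc.2 zero_le_one)

theorem dist_discountedValue_le (hl : l ∈ Set.Ioo (0 : ℝ) 1) (hm : m ∈ Set.Ioo (0 : ℝ) 1) :
    dist (G.discountedValue l) (G.discountedValue m) ≤ |l - m| / l := by
  have h := (G.contractingWith_shapley hl).dist_inequality (G.discountedValue l)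
    (G.discountedValue m)
  rw [G.shapley_discountedValue hl, dist_self, zero_add,
    Real.coe_toNNReal _ (sub_nonneg.2 hl.2.le), sub_sub_cancel] at h
  refine h.trans (div_le_div_of_nonneg_right ?_ hl.1.le)
  nth_rw 1 [← G.shapley_discountedValue hm]
  rw [abs_sub_comm]
  exact G.dist_shapley_le (G.discountedValue_mem_Icc hm) m l

theorem continuousOn_discountedValue :
    ContinuousOn G.discountedValue (Set.Ioo (0 : ℝ) 1) := by
  intro l hl
  refine tendsto_iff_dist_tendsto_zero.2 (squeeze_zero' (Eventually.of_forall fun _ => dist_nonneg)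
    (g := fun m => |l - m| / l) ?_ ?_)
  · filter_upwards [self_mem_nhdsWithin] with m hm
    rw [dist_comm]
    exact G.dist_discountedValue_le hl hm
  · refine tendsto_nhdsWithin_of_tendsto_nhds (Continuous.tendsto' (by fun_prop) _ _ (by simp))

end DeterministicGame

/-! ### Fourier–Motzkin elimination -/

section FourierMotzkin

/-- A parameter set `T ⊆ Θ` is sign-determined if membership depends only on the signs at the
parameter of finitely many elements of a ring `R`, where `ev θ` evaluates elements of `R` at `θ`.
For polynomial rings these are the semialgebraic sets. -/
def SignDetermined {Θ R : Type*} [CommRing R] (ev : Θ → R →+* ℝ) (T : Set Θ) : Prop :=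
  ∃ F : Finset R, ∀ ⦃θ θ'⦄,
    (∀ p ∈ F, SignType.sign (ev θ p) = SignType.sign (ev θ' p)) → θ ∈ T → θ' ∈ T

variable {Θ R : Type*} [CommRing R] {ev : Θ → R →+* ℝ} {ι κ : Type*} [Finite ι]

theorem SignDetermined.of_sign_cases (c : ι → R) {T : Set Θ} {T' : (ι → SignType) → Set Θ}
    (hT' : ∀ σ, SignDetermined ev (T' σ))
    (hT : ∀ θ, θ ∈ T ↔ θ ∈ T' fun i => SignType.sign (ev θ (c i))) : SignDetermined ev T := by
  classical
  cases nonempty_fintype ι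
  choose F hF using hT'
  refine ⟨Finset.univ.biUnion F ∪ Finset.univ.image c, fun θ θ' h hθ => ?_⟩
  have hsign : (fun i => SignType.sign (ev θ (c i))) = fun i => SignType.sign (ev θ' (c i)) :=
    funext fun i => h _ (by simp)
  rw [hT] at hθ ⊢
  rw [← hsign]
  exact hF _ (fun p hp => h p (Finset.mem_union_left _ (Finset.mem_biUnion.2 ⟨_, by simp, hp⟩))) hθ

theorem SignDetermined.forall_nonneg (b : ι → R) :
    SignDetermined ev {θ | ∀ i, 0 ≤ ev θ (b i)} := by
  classical
  cases nonempty_fintype ι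
  refine ⟨Finset.univ.image b, fun θ θ' h hθ i => ?_⟩
  have hi := h (b i) (by simp)
  rw [← sign_nonneg_iff, ← hi, sign_nonneg_iff]
  exact hθ i

theorem exists_mem_upperBounds_inter_lowerBounds {s t : Set ℝ} (hs : s.Finite)
    (ht : t.Finite) (hst : ∀ x ∈ s, ∀ y ∈ t, x ≤ y) :
    (upperBounds s ∩ lowerBounds t).Nonempty := by
  rcases s.eq_empty_or_nonempty with rfl | hsne
  · simpa using! ht.bddBelow
  rcases t.eq_empty_or_nonempty with rfl | htne
  · simpa using! hs.bddAbove
  exact exists_between_of_forall_le hsne htne hst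

theorem exists_forall_nonneg_mul_add_iff (α β : ι → ℝ) :
    (∃ t, ∀ i, 0 ≤ α i * t + β i) ↔
      (∀ i, α i = 0 → 0 ≤ β i) ∧ ∀ i, 0 < α i → ∀ j, α j < 0 → 0 ≤ α i * β j - α j * β i := by
  constructor
  · rintro ⟨t, ht⟩
    refine ⟨fun i hi => by simpa [hi] using ht i, fun i hi j hj => ?_⟩
    nlinarith [mul_nonneg hi.le (ht j), mul_nonneg (neg_nonneg.2 hj.le) (ht i)]
  · rintro ⟨hzero, hpair⟩
    have hle : ∀ x ∈ (fun i => -β i / α i) '' {i | 0 < α i},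
        ∀ y ∈ (fun i => -β i / α i) '' {i | α i < 0}, x ≤ y := by
      rintro - ⟨i, hi, rfl⟩ - ⟨j, hj, rfl⟩
      rw [Set.mem_ofPred_eq] at hi hj
      rw [div_le_iff₀ hi, div_mul_eq_mul_div, le_div_iff_of_neg hj]
      linarith [hpair i hi j hj]
    obtain ⟨t, hlower, hupper⟩ :=
      exists_mem_upperBounds_inter_lowerBounds (Set.toFinite _) (Set.toFinite _) hle
    refine ⟨t, fun i => ?_⟩
    rcases lt_trichotomy (α i) 0 with hi | hi | hi
    · have := hupper ⟨i, hi, rfl⟩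
      rw [le_div_iff_of_neg hi] at this
      linarith
    · simpa [hi] using hzero i hi
    · have := hlower ⟨i, hi, rfl⟩
      rw [div_le_iff₀ hi] at this
      linarith

variable (ev) in
/-- The parameters at which the system of inequalities `0 ≤ ∑ k, a i k * x k + b i` has a
solution. -/
def feasibleSet [Fintype κ] (a : ι → κ → R) (b : ι → R) : Set Θ :=
  {θ | ∃ x : κ → ℝ, ∀ i, 0 ≤ ∑ k, ev θ (a i k) * x k + ev θ (b i)}

section EliminateFirst

variable {n : ℕ} (a : ι → Fin (n + 1) → R) (b : ι → R) (σ : ι → SignType)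

/-- The constraints that remain after eliminating the first variable from a system whose leading
coefficients have the signs `σ`: those not containing the variable, and one for each pair
consisting of a lower and an upper bound on it. -/
abbrev EliminationIndex : Type _ := {i // σ i = 0} ⊕ {i // σ i = 1} × {i // σ i = -1}

/-- The coefficients of the system after eliminating the first variable. -/
def eliminatedCoeff : EliminationIndex σ → Fin n → R :=
  Sum.elim (fun i => Fin.tail (a i)) fun i =>
    a i.1 0 • Fin.tail (a i.2) - a i.2 0 • Fin.tail (a i.1)

/-- The constant terms of the system after eliminating the first variable. -/
def eliminatedConst : EliminationIndex σ → R :=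
  Sum.elim (fun i => b i) fun i => a i.1 0 * b i.2 - a i.2 0 * b i.1

theorem mem_feasibleSet_succ_iff {θ : Θ} (hσ : ∀ i, SignType.sign (ev θ (a i 0)) = σ i) :
    θ ∈ feasibleSet ev a b ↔ θ ∈ feasibleSet ev (eliminatedCoeff a σ) (eliminatedConst a b σ) := by
  have combine (i j : ι) (x : Fin n → ℝ) :
      ∑ k, ev θ ((a i 0 • Fin.tail (a j) - a j 0 • Fin.tail (a i)) k) * x k +
          ev θ (a i 0 * b j - a j 0 * b i) =
        ev θ (a i 0) * (∑ k, ev θ (Fin.tail (a j) k) * x k + ev θ (b j)) -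
          ev θ (a j 0) * (∑ k, ev θ (Fin.tail (a i) k) * x k + ev θ (b i)) := by
    simp only [Pi.sub_apply, Pi.smul_apply, smul_eq_mul, map_sub, map_mul, sub_mul,
      Finset.sum_sub_distrib, mul_add, Finset.mul_sum, mul_assoc]
    ring
  calc θ ∈ feasibleSet ev a b
    _ ↔ ∃ x : Fin n → ℝ, ∃ t, ∀ i,
          0 ≤ ev θ (a i 0) * t + (∑ k, ev θ (Fin.tail (a i) k) * x k + ev θ (b i)) := by
        rw [exists_comm]
        simp only [feasibleSet, Set.mem_ofPred_eq, Fin.exists_fin_succ_pi, Fin.sum_univ_succ,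
          Fin.cons_zero, Fin.cons_succ, Fin.tail, add_assoc]
    _ ↔ _ := by
        refine exists_congr fun x => ?_
        simp only [exists_forall_nonneg_mul_add_iff, Sum.forall, Prod.forall, Subtype.forall,
          eliminatedCoeff, eliminatedConst, Sum.elim_inl, Sum.elim_inr, combine, ← hσ,
          sign_eq_zero_iff, sign_eq_one_iff, sign_eq_neg_one_iff]

end EliminateFirst

theorem signDetermined_feasibleSet_fin {n : ℕ} (a : ι → Fin n → R) (b : ι → R) :
    SignDetermined ev (feasibleSet ev a b) := by
  induction n generalizing ι with
  | zero => simpa [feasibleSet] using SignDetermined.forall_nonneg b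
  | succ n ih =>
    exact SignDetermined.of_sign_cases (fun i => a i 0)
      (fun σ => ih (eliminatedCoeff a σ) (eliminatedConst a b σ))
      fun θ => mem_feasibleSet_succ_iff a b _ fun i => rfl

theorem signDetermined_feasibleSet [Fintype κ] (a : ι → κ → R) (b : ι → R) :
    SignDetermined ev (feasibleSet ev a b) := by
  let e := Fintype.equivFin κ
  convert signDetermined_feasibleSet_fin (ev := ev) (fun i k => a i (e.symm k)) b using 1
  ext θ
  refine (e.arrowCongr (Equiv.refl ℝ)).exists_congr fun x => forall_congr' fun i => ?_
  rw [← e.symm.sum_comp]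
  rfl

end FourierMotzkin

section BoundaryPolynomial

open Polynomial

theorem continuous_evalEval_right (P : ℝ[X][X]) (x : ℝ) : Continuous fun y => P.evalEval x y := by
  simp only [← map_evalRingHom_eval]
  exact Polynomial.continuous _

theorem SignDetermined.exists_polynomial_eq_zero {T : Set (ℝ × ℝ)}
    (hT : SignDetermined (fun θ : ℝ × ℝ => evalEvalRingHom θ.1 θ.2) T) :
    ∃ P : ℝ[X][X], P ≠ 0 ∧
      ∀ x y, (x, y) ∈ T → (∀ z > y, (x, z) ∉ T) → P.evalEval x y = 0 := by
  classical
  obtain ⟨F, hF⟩ := hT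
  refine ⟨∏ p ∈ F with p ≠ 0, p, Finset.prod_ne_zero_iff.2 fun p hp =>
    (Finset.mem_filter.1 hp).2, fun x y hy hlast => ?_⟩
  rw [← coe_evalEvalRingHom, map_prod, Finset.prod_eq_zero_iff]
  simp only [coe_evalEvalRingHom]
  by_contra! hne
  have hsign : ∀ᶠ z in 𝓝[>] y, ∀ p ∈ F,
      SignType.sign (p.evalEval x z) = SignType.sign (p.evalEval x y) := by
    refine (Finset.eventually_all F).2 fun p hp => ?_
    rcases eq_or_ne p 0 with rfl | hp0
    · simp
    have hsignAt : ContinuousAt (fun z => SignType.sign (p.evalEval x z)) y :=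
      ContinuousAt.comp' (continuousAt_sign_of_ne_zero (hne p (Finset.mem_filter.2 ⟨hp, hp0⟩)))
        (continuous_evalEval_right p x).continuousAt
    exact eventually_nhdsWithin_of_eventually_nhds <|
      hsignAt.eventually (p := (· = _)) (by simp [nhds_discrete])
  obtain ⟨z, hz, hyz⟩ := (hsign.and self_mem_nhdsWithin).exists
  exact hlast z hyz (hF (θ := (x, y)) (fun p hp => (hz p hp).symm) hy)

end BoundaryPolynomial

section NonnegativeGame

open Matrix

variable {Θ R I J : Type*} [CommRing R] {ev : Θ → R →+* ℝ} [Fintype I]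

/-- The coefficients of the linear inequalities saying that a vector is a mixed action of player 1
that guarantees a nonnegative payoff in the matrix game `A`. -/
def nonnegGameCoeff [DecidableEq I] (A : Matrix I J R) : I ⊕ Unit ⊕ Unit ⊕ J → I → R :=
  Sum.elim (fun i => Pi.single i 1) <|
    Sum.elim (fun _ _ => 1) <| Sum.elim (fun _ _ => -1) fun j i => A i j

/-- The constant terms belonging to `nonnegGameCoeff`. -/
def nonnegGameConst : I ⊕ Unit ⊕ Unit ⊕ J → R :=
  Sum.elim (fun _ => 0) <| Sum.elim (fun _ => -1) <| Sum.elim (fun _ => 1) fun _ => 0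

theorem signDetermined_nonneg_matrixGame [Finite J] (A : Matrix I J R) :
    SignDetermined ev {θ | ∃ x ∈ stdSimplex ℝ I, ∀ j, 0 ≤ (x ᵥ* A.map (ev θ)) j} := by
  classical
  convert signDetermined_feasibleSet (ev := ev) (nonnegGameCoeff A) nonnegGameConst using 1
  ext θ
  refine exists_congr fun x => ?_
  have hrow (i : I) : ∑ k, ev θ ((Pi.single i 1 : I → R) k) * x k = x i := by
    simp [Pi.single_apply, apply_ite (ev θ)]
  have hpay (j : J) : (x ᵥ* A.map (ev θ)) j = ∑ i, ev θ (A i j) * x i :=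
    dotProduct_comm _ _
  simp only [nonnegGameCoeff, nonnegGameConst, stdSimplex, Set.mem_ofPred_eq, hpay,
    Sum.forall, Sum.elim_inl, Sum.elim_inr, hrow, map_zero, map_one, map_neg, add_zero,
    one_mul, neg_one_mul, Finset.sum_neg_distrib, forall_const, le_antisymm_iff,
    ← sub_eq_add_neg, sub_nonneg, neg_add_eq_sub]
  tauto

end NonnegativeGame

/-! ### Attia–Oliu-Barton determinants -/

section GapDet

open Matrix

variable {S R A : Type*} [Fintype S] [DecidableEq S] [CommRing R] [Fintype A]

/-- When `N` is invertible this is `det N * (w k - z)`, where `w` solves `N *ᵥ w = u`. -/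
def gapDet (N : Matrix S S R) (u : S → R) (k : S) (z : R) : R :=
  cramer N u k - z * N.det

theorem gapDet_eq_det (N : Matrix S S R) (u : S → R) (k : S) (z : R) :
    gapDet N u k z = (N.updateCol k fun s => u s - z * N s k).det := by
  have hcol : cramer N (fun s => N s k) = Pi.single k N.det := cramer_row_self _ _ _ fun _ => rfl
  have hsub : (fun s => u s - z * N s k) = u - z • fun s => N s k := rfl
  rw [← cramer_apply, hsub, map_sub, map_smul, hcol, gapDet]
  simp

theorem map_gapDet {R' : Type*} [CommRing R'] (φ : R →+* R') (N : Matrix S S R) (u : S → R)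
    (k : S) (z : R) : φ (gapDet N u k z) = gapDet (N.map φ) (φ ∘ u) k (φ z) := by
  simp only [gapDet, cramer_apply, map_sub, map_mul, RingHom.map_det, RingHom.mapMatrix_apply,
    map_updateCol]

theorem sum_prod_mul_gapDet (x : S → A → R) (N : S → A → S → R) (u : S → A → R) (k : S) (z : R) :
    ∑ f : S → A, (∏ s, x s (f s)) * gapDet (of fun s => N s (f s)) (fun s => u s (f s)) k z =
      gapDet (of fun s => ∑ a, x s a • N s a) (fun s => ∑ a, x s a * u s a) k z := by
  let row (s : S) (a : A) : S → R := Function.update (N s a) k (u s a - z * N s a k)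
  have hrow (f : S → A) : gapDet (of fun s => N s (f s)) (fun s => u s (f s)) k z =
      detRowAlternating fun s => row s (f s) :=
    gapDet_eq_det _ _ _ _
  have hmix : gapDet (of fun s => ∑ a, x s a • N s a) (fun s => ∑ a, x s a * u s a) k z =
      detRowAlternating fun s => ∑ a, x s a • row s a := by
    rw [gapDet_eq_det]
    congr 1
    ext s t
    rcases eq_or_ne t k with rfl | htk
    · simp [row, mul_sub, Finset.mul_sum, mul_left_comm]
    · simp [row, *]
  have hexpand := (detRowAlternating (R := R) (n := S)).toMultilinearMap.map_sum
    fun s a => x s a • row s a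
  simp only [MultilinearMap.map_smul_univ, AlternatingMap.coe_multilinearMap, smul_eq_mul]
    at hexpand
  simp only [hmix, hrow, hexpand]

end GapDet

section StochasticResolvent

open Matrix

variable {S : Type*} [Fintype S] [DecidableEq S] {Q : Matrix S S ℝ} {t : ℝ}

theorem nonneg_of_nonneg_one_sub_smul_mulVec (hQ : Q ∈ rowStochastic ℝ S)
    (ht : t ∈ Set.Ico (0 : ℝ) 1) {w : S → ℝ} (hw : 0 ≤ (1 - t • Q) *ᵥ w) : 0 ≤ w := by
  cases isEmpty_or_nonempty S
  · exact fun s => isEmptyElim s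
  obtain ⟨s₀, hmin⟩ := Finite.exists_min w
  have hs₀ : 0 ≤ w s₀ - t * (Q *ᵥ w) s₀ := by
    simpa [sub_mulVec, smul_mulVec] using hw s₀
  have hQw : w s₀ ≤ (Q *ᵥ w) s₀ := le_dotProduct_of_mem_stdSimplex
    ⟨fun _ => nonneg_of_mem_rowStochastic hQ, sum_row_of_mem_rowStochastic hQ s₀⟩ hmin
  have : 0 ≤ w s₀ := by nlinarith [ht.1, ht.2]
  exact fun s => this.trans (hmin s)

theorem det_one_sub_smul_pos (hQ : Q ∈ rowStochastic ℝ S) (ht : t ∈ Set.Ico (0 : ℝ) 1) :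
    0 < (1 - t • Q).det := by
  have hne : ∀ u ∈ Set.Ico (0 : ℝ) 1, (1 - u • Q).det ≠ 0 := fun u hu hdet => by
    obtain ⟨w, hw, hker⟩ := exists_mulVec_eq_zero_iff.2 hdet
    refine hw (le_antisymm ?_ (nonneg_of_nonneg_one_sub_smul_mulVec hQ hu hker.ge))
    rw [← neg_nonneg]
    exact nonneg_of_nonneg_one_sub_smul_mulVec hQ hu (by simp [mulVec_neg, hker])
  have hcont : ContinuousOn (fun u : ℝ => (1 - u • Q).det) (Set.Icc 0 t) := by fun_prop
  by_contra! hneg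
  obtain ⟨u, hu, hdet⟩ := intermediate_value_Icc' ht.1 hcont ⟨hneg, by simp⟩
  exact hne u ⟨hu.1, hu.2.trans_lt ht.2⟩ hdet

theorem cramer_one_sub_smul_nonneg (hQ : Q ∈ rowStochastic ℝ S) (ht : t ∈ Set.Ico (0 : ℝ) 1)
    {w : S → ℝ} (hw : 0 ≤ w) : 0 ≤ cramer (1 - t • Q) w := by
  refine nonneg_of_nonneg_one_sub_smul_mulVec hQ ht ?_
  rw [mulVec_cramer]
  exact smul_nonneg (det_one_sub_smul_pos hQ ht).le hw

theorem cramer_mulVec (N : Matrix S S ℝ) (v : S → ℝ) : cramer N (N *ᵥ v) = N.det • v := by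
  rw [cramer_eq_adjugate_mulVec, mulVec_mulVec, adjugate_mul, smul_mulVec, one_mulVec]

theorem gapDet_nonneg (hQ : Q ∈ rowStochastic ℝ S) (ht : t ∈ Set.Ico (0 : ℝ) 1) {u v : S → ℝ}
    {k : S} {z : ℝ} (hv : (1 - t • Q) *ᵥ v ≤ u) (hz : z ≤ v k) :
    0 ≤ gapDet (1 - t • Q) u k z := by
  have hcramer := cramer_one_sub_smul_nonneg hQ ht (sub_nonneg.2 hv) k
  rw [map_sub, cramer_mulVec] at hcramer
  simp only [Pi.zero_apply, Pi.sub_apply, Pi.smul_apply, smul_eq_mul] at hcramer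
  rw [gapDet]
  nlinarith [det_one_sub_smul_pos hQ ht]

theorem gapDet_neg (hQ : Q ∈ rowStochastic ℝ S) (ht : t ∈ Set.Ico (0 : ℝ) 1) {u v : S → ℝ}
    {k : S} {z : ℝ} (hv : u ≤ (1 - t • Q) *ᵥ v) (hz : v k < z) :
    gapDet (1 - t • Q) u k z < 0 := by
  have hcramer := cramer_one_sub_smul_nonneg hQ ht (sub_nonneg.2 hv) k
  rw [map_sub, cramer_mulVec] at hcramer
  simp only [Pi.zero_apply, Pi.sub_apply, Pi.smul_apply, smul_eq_mul] at hcramer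
  rw [gapDet]
  nlinarith [det_one_sub_smul_pos hQ ht]

end StochasticResolvent

section MixedTransition

open Matrix

variable {S A : Type*} [DecidableEq S]

/-- Row `s` of the matrix `1 - t • P`, where the chain with transition matrix `P` moves from `s` to
`s'` with certainty. -/
def resolventRow {R : Type*} [CommRing R] (t : R) (s s' : S) : S → R :=
  Pi.single s 1 - t • Pi.single s' 1

variable [Fintype A]

/-- The transition matrix of the Markov chain that moves from `s` to `d s a` with
probability `x s a`. -/
def mixedTransition (d : S → A → S) (x : S → A → ℝ) : Matrix S S ℝ :=
  of fun s => ∑ a, x s a • Pi.single (d s a) 1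

variable {d : S → A → S} {x : S → A → ℝ}

theorem one_sub_smul_mixedTransition (hx : ∀ s, x s ∈ stdSimplex ℝ A) (t : ℝ) :
    1 - t • mixedTransition d x = of fun s => ∑ a, x s a • resolventRow t s (d s a) := by
  ext s s'
  simp only [resolventRow, smul_sub, Finset.sum_sub_distrib, ← Finset.sum_smul, (hx _).2, one_smul,
    smul_comm _ t, ← Finset.smul_sum, of_apply]
  simp [mixedTransition, one_apply, Pi.single_apply, eq_comm]

variable [Fintype S]

theorem mixedTransition_mulVec (v : S → ℝ) (s : S) :
    (mixedTransition d x *ᵥ v) s = ∑ a, x s a * v (d s a) := by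
  simp only [mulVec, mixedTransition, of_apply, sum_dotProduct, smul_dotProduct,
    single_one_dotProduct, smul_eq_mul]

theorem mixedTransition_mem_rowStochastic (hx : ∀ s, x s ∈ stdSimplex ℝ A) :
    mixedTransition d x ∈ rowStochastic ℝ S := by
  refine ⟨fun s s' => ?_, ?_⟩
  · simp only [mixedTransition, of_apply, Finset.sum_apply, Pi.smul_apply]
    exact Finset.sum_nonneg fun a _ => smul_nonneg ((hx s).1 a) <|
      (Pi.single_nonneg (α := fun _ => ℝ)).2 zero_le_one s'
  · ext s
    simp [mixedTransition_mulVec, (hx s).2]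

theorem prod_apply_mem_stdSimplex (hx : ∀ s, x s ∈ stdSimplex ℝ A) :
    (fun f : S → A => ∏ s, x s (f s)) ∈ stdSimplex ℝ (S → A) := by
  refine ⟨fun f => Finset.prod_nonneg fun s _ => (hx s).1 _, ?_⟩
  rw [← Fintype.prod_sum]
  exact Finset.prod_eq_one fun s _ => (hx s).2

variable {t : ℝ} {r : S → A → ℝ} {v : S → ℝ} {k : S} {z : ℝ}

theorem sum_prod_mul_gapDet_nonneg (hx : ∀ s, x s ∈ stdSimplex ℝ A) (ht : t ∈ Set.Ico (0 : ℝ) 1)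
    (hv : ∀ s, v s ≤ ∑ a, x s a * (r s a + t * v (d s a))) (hz : z ≤ v k) :
    0 ≤ ∑ f : S → A, (∏ s, x s (f s)) *
      gapDet (of fun s => resolventRow t s (d s (f s))) (fun s => r s (f s)) k z := by
  rw [sum_prod_mul_gapDet x (fun s a => resolventRow t s (d s a)) r,
    ← one_sub_smul_mixedTransition hx]
  refine gapDet_nonneg (mixedTransition_mem_rowStochastic hx) ht (fun s => ?_) hz
  simpa [sub_mulVec, smul_mulVec, mixedTransition_mulVec, mul_add, Finset.sum_add_distrib,
    Finset.mul_sum, mul_left_comm] using hv s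

theorem sum_prod_mul_gapDet_neg (hx : ∀ s, x s ∈ stdSimplex ℝ A) (ht : t ∈ Set.Ico (0 : ℝ) 1)
    (hv : ∀ s, ∑ a, x s a * (r s a + t * v (d s a)) ≤ v s) (hz : v k < z) :
    ∑ f : S → A, (∏ s, x s (f s)) *
      gapDet (of fun s => resolventRow t s (d s (f s))) (fun s => r s (f s)) k z
      < 0 := by
  rw [sum_prod_mul_gapDet x (fun s a => resolventRow t s (d s a)) r,
    ← one_sub_smul_mixedTransition hx]
  refine gapDet_neg (mixedTransition_mem_rowStochastic hx) ht (fun s => ?_) hz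
  simpa [sub_mulVec, smul_mulVec, mixedTransition_mulVec, mul_add, Finset.sum_add_distrib,
    Finset.mul_sum, mul_left_comm, le_sub_iff_add_le] using hv s

end MixedTransition

namespace DeterministicGame

open Matrix Polynomial

variable {S I J : Type*} (G : DeterministicGame S I J) [Fintype S]

section GapMatrix

variable [DecidableEq S]

/-- The payoffs of the matrix game of Attia and Oliu-Barton for the initial state `k`, in which the
actions are the pure stationary strategies of the game. It is formed over an `ℝ`-algebra, so that
the discount `l` and the level `z` may be real numbers or indeterminates. -/
def gapMatrix {R : Type*} [CommRing R] [Algebra ℝ R] (k : S) (l z : R) : Matrix (S → I) (S → J) R :=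
  of fun f h =>
    gapDet (of fun s => resolventRow (1 - l) s (G.next s (f s) (h s)))
      (fun s => l * algebraMap ℝ R (G.reward s (f s) (h s))) k z

theorem map_gapMatrix {R R' : Type*} [CommRing R] [Algebra ℝ R] [CommRing R'] [Algebra ℝ R']
    (φ : R →ₐ[ℝ] R') (k : S) (l z : R) :
    (G.gapMatrix k l z : Matrix (S → I) (S → J) R).map φ = G.gapMatrix k (φ l) (φ z) := by
  ext f h
  refine (map_gapDet φ.toRingHom _ _ k z).trans ?_
  congr 1
  · ext s t
    simp [resolventRow, Pi.single_apply, apply_ite φ]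
  · ext s
    simp

variable [Fintype I] [Nonempty I] [Fintype J] [Nonempty J] {l : ℝ}

theorem exists_gapMatrix_nonneg (hl : l ∈ Set.Ioo (0 : ℝ) 1) (k : S) :
    ∃ x ∈ stdSimplex ℝ (S → I), ∀ h, 0 ≤ (x ᵥ* G.gapMatrix k l (G.discountedValue l k)) h := by
  choose x hx _ _ hguar _ using G.isMatrixGameValue_discountedValue hl
  refine ⟨_, prod_apply_mem_stdSimplex hx, fun h => ?_⟩
  exact sum_prod_mul_gapDet_nonneg (d := fun s i => G.next s i (h s))
    (r := fun s i => l * G.reward s i (h s)) hx ⟨sub_nonneg.2 hl.2.le, sub_lt_self 1 hl.1⟩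
    (fun s => hguar s (h s)) le_rfl

theorem not_exists_gapMatrix_nonneg (hl : l ∈ Set.Ioo (0 : ℝ) 1) {k : S} {z : ℝ}
    (hz : G.discountedValue l k < z) :
    ¬ ∃ x ∈ stdSimplex ℝ (S → I), ∀ h, 0 ≤ (x ᵥ* G.gapMatrix k l z) h := by
  rintro ⟨x, hx, hnonneg⟩
  choose _ _ y hy _ hguar using G.isMatrixGameValue_discountedValue hl
  let yProd : (S → J) → ℝ := fun h => ∏ s, y s (h s)
  have hneg (f : S → I) : (G.gapMatrix k l z *ᵥ yProd) f < 0 := by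
    have := sum_prod_mul_gapDet_neg (d := fun s j => G.next s (f s) j)
      (r := fun s j => l * G.reward s (f s) j) hy ⟨sub_nonneg.2 hl.2.le, sub_lt_self 1 hl.1⟩
      (fun s => (dotProduct_comm _ _).trans_le (hguar s (f s))) hz
    exact (dotProduct_comm _ _).trans_lt this
  obtain ⟨f, hf⟩ := Finite.exists_max (G.gapMatrix k l z *ᵥ yProd)
  refine (hneg f).not_ge ?_
  calc 0 ≤ yProd ⬝ᵥ (x ᵥ* G.gapMatrix k l z) :=
        le_dotProduct_of_mem_stdSimplex (prod_apply_mem_stdSimplex hy) hnonneg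
    _ = x ⬝ᵥ (G.gapMatrix k l z *ᵥ yProd) := by rw [dotProduct_comm, dotProduct_mulVec]
    _ ≤ (G.gapMatrix k l z *ᵥ yProd) f := dotProduct_le_of_mem_stdSimplex hx hf

end GapMatrix

variable [Fintype I] [Nonempty I] [Fintype J] [Nonempty J]

theorem exists_evalEval_discountedValue_eq_zero (k : S) :
    ∃ P : ℝ[X][X], P ≠ 0 ∧
      ∀ l ∈ Set.Ioo (0 : ℝ) 1, P.evalEval l (G.discountedValue l k) = 0 := by
  classical
  obtain ⟨P, hP, hzero⟩ := (signDetermined_nonneg_matrixGame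
    (ev := fun θ : ℝ × ℝ => evalEvalRingHom θ.1 θ.2)
    (G.gapMatrix k (C X : ℝ[X][X]) X)).exists_polynomial_eq_zero
  have hmap (x y : ℝ) : (G.gapMatrix k (C X : ℝ[X][X]) X).map (evalEvalRingHom x y) =
      G.gapMatrix k x y := by
    rw [coe_evalEvalRingHom, ← coe_aevalAeval_eq_evalEval, map_gapMatrix]
    simp
  refine ⟨P, hP, fun l hl => hzero _ _ ?_ fun z hz => ?_⟩
  · simpa only [Set.mem_ofPred_eq, hmap] using G.exists_gapMatrix_nonneg hl k
  · simpa only [Set.mem_ofPred_eq, hmap] using G.not_exists_gapMatrix_nonneg hl hz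

end DeterministicGame

/-! ### Bounded variation -/

section BoundedVariation

open Polynomial MeasureTheory

-- One half of Banach's formula: the right-hand side integrates the Banach indicatrix of `f`.
theorem eVariationOn_le_lintegral_encard {f : ℝ → ℝ} {s : Set ℝ} [s.OrdConnected]
    (hf : ContinuousOn f s) : eVariationOn f s ≤ ∫⁻ c, (s ∩ f ⁻¹' {c}).encard := by
  classical
  refine iSup_le fun ⟨n, u, hu, hus⟩ => ?_
  let crossed (i : ℕ) : Set ℝ := Set.uIoo (f (u i)) (f (u (i + 1)))
  have hmeas (i : ℕ) : MeasurableSet (crossed i) := measurableSet_Ioo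
  have hcross (c : ℝ) : ({i ∈ Finset.range n | c ∈ crossed i}.card : ℕ∞) ≤
      (s ∩ f ⁻¹' {c}).encard := by
    have hx (i : ℕ) (hi : c ∈ crossed i) : ∃ x ∈ Set.Ioo (u i) (u (i + 1)), f x = c := by
      have hfi := hf.mono (Set.Icc_subset s (hus i) (hus (i + 1)))
      rcases le_total (f (u i)) (f (u (i + 1))) with h | h
      · exact intermediate_value_Ioo (hu i.le_succ) hfi (Set.uIoo_of_le h ▸ hi)
      · exact intermediate_value_Ioo' (hu i.le_succ) hfi (Set.uIoo_of_ge h ▸ hi)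
    choose! x hx hfx using hx
    rw [← Set.encard_coe_eq_coe_finsetCard]
    refine Set.encard_le_encard_of_injOn (f := x) (fun i hi => ?_) fun i hi j hj hij => ?_
    · have hi := (Finset.mem_filter.1 hi).2
      exact ⟨Set.Icc_subset s (hus i) (hus (i + 1)) (Set.Ioo_subset_Icc_self (hx i hi)), hfx i hi⟩
    · by_contra hne
      exact Set.disjoint_left.1 (hu.pairwise_disjoint_on_Ioo_succ hne)
        (hx i (Finset.mem_filter.1 hi).2) (hij ▸ hx j (Finset.mem_filter.1 hj).2)
  calc ∑ i ∈ Finset.range n, edist (f (u (i + 1))) (f (u i))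
      = ∑ i ∈ Finset.range n, ∫⁻ c, (crossed i).indicator 1 c :=
        Finset.sum_congr rfl fun i _ => by
          rw [lintegral_indicator_one (hmeas i), Real.volume_uIoo, edist_dist,
            Real.dist_eq]
    _ = ∫⁻ c, ∑ i ∈ Finset.range n, (crossed i).indicator 1 c :=
        (lintegral_finsetSum _ fun i _ => measurable_one.indicator (hmeas i)).symm
    _ ≤ ∫⁻ c, (s ∩ f ⁻¹' {c}).encard := by
        refine lintegral_mono fun c => ?_
        simpa [Set.indicator_apply] using ENat.toENNReal_le.2 (hcross c)

theorem exists_forall_natDegree_eval_C_le {R : Type*} [CommSemiring R] (P : R[X][X]) :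
    ∃ d : ℕ, ∀ c : R, (P.eval (C c)).natDegree ≤ d := by
  refine ⟨P.support.sup fun i => (P.coeff i).natDegree, fun c => ?_⟩
  rw [eval_eq_sum, Polynomial.sum]
  refine natDegree_sum_le_of_forall_le _ _ fun i hi => ?_
  rw [← C_pow]
  exact (natDegree_mul_C_le _ _).trans (Finset.le_sup (f := fun i => (P.coeff i).natDegree) hi)

theorem boundedVariationOn_of_evalEval_eq_zero {P : ℝ[X][X]} (hP : P ≠ 0) {f : ℝ → ℝ} {s : Set ℝ}
    [s.OrdConnected] (hf : ContinuousOn f s) {a b : ℝ} (hmem : ∀ x ∈ s, f x ∈ Set.Icc a b)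
    (hroot : ∀ x ∈ s, P.evalEval x (f x) = 0) : BoundedVariationOn f s := by
  obtain ⟨d, hd⟩ := exists_forall_natDegree_eval_C_le P
  have hbad : {c : ℝ | P.eval (C c) = 0}.Finite :=
    (P.roots.finite_toSet.preimage C_injective.injOn).subset fun c hc => (mem_roots hP).2 hc
  have hcard (c : ℝ) (hc : P.eval (C c) ≠ 0) :
      ((s ∩ f ⁻¹' {c}).encard : ENNReal) ≤ (Set.Icc a b).indicator (fun _ => (d : ENNReal)) c := by
    by_cases hcab : c ∈ Set.Icc a b
    · rw [Set.indicator_of_mem hcab, ← ENat.toENNReal_coe, ENat.toENNReal_le]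
      have hsub : s ∩ f ⁻¹' {c} ⊆ (P.eval (C c)).roots.toFinset := by
        rintro x ⟨hx, rfl⟩
        simpa [hc] using hroot x hx
      refine (Set.encard_le_encard hsub).trans ?_
      rw [Set.encard_coe_eq_coe_finsetCard]
      exact_mod_cast (Multiset.toFinset_card_le _).trans ((card_roots' _).trans (hd c))
    · have hempty : s ∩ f ⁻¹' {c} = ∅ := by
        refine Set.eq_empty_of_forall_notMem ?_
        rintro x ⟨hx, rfl⟩
        exact hcab (hmem x hx)
      simp [hempty]
  refine ((eVariationOn_le_lintegral_encard hf).trans_lt ?_).ne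
  calc ∫⁻ c, (s ∩ f ⁻¹' {c}).encard
      ≤ ∫⁻ c, (Set.Icc a b).indicator (fun _ => (d : ENNReal)) c :=
        lintegral_mono_ae <| (measure_eq_zero_iff_ae_notMem.1 (hbad.measure_zero _)).mono hcard
    _ < ⊤ := by
        rw [lintegral_indicator_const measurableSet_Icc, Real.volume_Icc]
        exact ENNReal.mul_lt_top (ENNReal.natCast_lt_top d) ENNReal.ofReal_lt_top

theorem boundedVariationOn_pi {α ι : Type*} {E : ι → Type*} [LinearOrder α] [Fintype ι]
    [∀ k, PseudoEMetricSpace (E k)] {f : α → ∀ k, E k} {s : Set α}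
    (hf : ∀ k, BoundedVariationOn (fun x => f x k) s) : BoundedVariationOn f s := by
  refine ne_top_of_le_ne_top (ENNReal.sum_ne_top.2 fun k (_ : k ∈ Finset.univ) => hf k) ?_
  refine iSup_le fun ⟨n, u, hu, hus⟩ => ?_
  calc ∑ i ∈ Finset.range n, edist (f (u (i + 1))) (f (u i))
      ≤ ∑ i ∈ Finset.range n, ∑ k, edist (f (u (i + 1)) k) (f (u i) k) :=
        Finset.sum_le_sum fun i _ => edist_pi_le_iff.2 fun k =>
          Finset.single_le_sum (f := fun k => edist (f (u (i + 1)) k) (f (u i) k))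
            (fun _ _ => zero_le) (Finset.mem_univ k)
    _ = ∑ k, ∑ i ∈ Finset.range n, edist (f (u (i + 1)) k) (f (u i) k) := Finset.sum_comm
    _ ≤ ∑ k, eVariationOn (fun x => f x k) s :=
        Finset.sum_le_sum fun k _ => eVariationOn.sum_le hu hus

theorem DeterministicGame.boundedVariationOn_discountedValue {S I J : Type*} [Fintype S]
    [Fintype I] [Nonempty I] [Fintype J] [Nonempty J] (G : DeterministicGame S I J) :
    BoundedVariationOn G.discountedValue (Set.Ioo 0 1) := by
  refine boundedVariationOn_pi fun k => ?_
  obtain ⟨P, hP, hroot⟩ := G.exists_evalEval_discountedValue_eq_zero k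
  exact boundedVariationOn_of_evalEval_eq_zero hP
    (fun l hl => continuousWithinAt_pi.1 (G.continuousOn_discountedValue l hl) k)
    (fun l hl => ⟨(G.discountedValue_mem_Icc hl).1 k, (G.discountedValue_mem_Icc hl).2 k⟩) hroot

end BoundedVariation

/-! ### Slowly varying discount schedules -/

section SlowSchedule

variable {E : Type*} [PseudoMetricSpace E] {V : ℝ → E}

theorem exists_dist_add_sub_eq_mul (hV : ContinuousOn V (Set.Ioo 0 1)) {η l : ℝ} (hη : 0 < η)
    (hl : l ∈ Set.Ioo (0 : ℝ) 1) : ∃ m ∈ Set.Ioo 0 l, dist (V l) (V m) + (l - m) = η * m := by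
  let m₀ : ℝ := l / (2 * (1 + η))
  have hm₀ : 0 < m₀ := div_pos hl.1 (by positivity)
  have hm₀l : m₀ * (2 * (1 + η)) = l := div_mul_cancel₀ _ (by positivity)
  have hlt : m₀ < l := by nlinarith
  have hsub : Set.Icc m₀ l ⊆ Set.Ioo 0 1 := fun y hy => ⟨hm₀.trans_le hy.1, hy.2.trans_lt hl.2⟩
  have hVsub := hV.mono hsub
  have hcont : ContinuousOn (fun m => dist (V l) (V m) + (l - m) - η * m) (Set.Icc m₀ l) := by
    fun_prop
  have hzero : (0 : ℝ) ∈ Set.Ioo (dist (V l) (V l) + (l - l) - η * l)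
      (dist (V l) (V m₀) + (l - m₀) - η * m₀) := by
    have := dist_nonneg (x := V l) (y := V m₀)
    constructor
    · rw [dist_self]
      nlinarith [hl.1]
    · nlinarith
  obtain ⟨m, hm, heq⟩ := intermediate_value_Ioo' hlt.le hcont hzero
  exact ⟨m, ⟨hm₀.trans hm.1, hm.2⟩, sub_eq_zero.1 heq⟩

theorem sum_dist_le_of_antitone {s : Set ℝ} (hV : BoundedVariationOn V s) {u : ℕ → ℝ}
    (hu : Antitone u) (hus : ∀ n, u n ∈ s) (n : ℕ) :
    ∑ i ∈ Finset.range n, dist (V (u i)) (V (u (i + 1))) ≤ (eVariationOn V s).toReal := by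
  rw [← ENNReal.ofReal_le_iff_le_toReal hV,
    ENNReal.ofReal_sum_of_nonneg fun i _ => dist_nonneg]
  calc ∑ i ∈ Finset.range n, ENNReal.ofReal (dist (V (u i)) (V (u (i + 1))))
      = ∑ i ∈ Finset.range n, edist ((V ∘ u) (i + 1)) ((V ∘ u) i) :=
        Finset.sum_congr rfl fun i _ => by rw [← edist_dist, edist_comm]; rfl
    _ ≤ eVariationOn (V ∘ u) Set.univ := eVariationOn.sum_le monotone_id fun _ => Set.mem_univ _
    _ ≤ eVariationOn V s :=
        eVariationOn.comp_le_of_antitoneOn V u (hu.antitoneOn _) fun i _ => hus i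

/-- A summable decreasing sequence of discounts along which, within a window of `W` indices, both
the discount and the discounted value `V` vary little compared with the discount itself. -/
structure IsSlowSchedule (V : ℝ → E) (ε : ℝ) (W : ℕ) (u : ℕ → ℝ) : Prop where
  mem_Ioo : ∀ n, u n ∈ Set.Ioo (0 : ℝ) 1
  antitone : Antitone u
  sum_le : ∀ n, ∑ i ∈ Finset.range n, u i ≤ ε
  dist_add_abs_le : ∀ j m, j ≤ m + W → m ≤ j + W →
    dist (V (u j)) (V (u m)) + |u j - u m| ≤ ε * u m

theorem IsSlowSchedule.apply_le {ε : ℝ} {W : ℕ} {u : ℕ → ℝ} (hu : IsSlowSchedule V ε W u) (m : ℕ) :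
    u m ≤ ε :=
  (Finset.single_le_sum (fun i _ => (hu.mem_Ioo i).1.le) (Finset.self_mem_range_succ m)).trans
    (hu.sum_le (m + 1))

theorem IsSlowSchedule.sum_div_le {ε : ℝ} {W L : ℕ} {u : ℕ → ℝ} (hu : IsSlowSchedule V ε W u)
    (hL : 1 ≤ L) (m : ℕ) : (∑ i ∈ Finset.range m, u i) / L ≤ ε :=
  (div_le_self (Finset.sum_nonneg fun i _ => (hu.mem_Ioo i).1.le) (by exact_mod_cast hL)).trans
    (hu.sum_le m)

theorem exists_seq_dist_add_sub_eq_mul (hcont : ContinuousOn V (Set.Ioo 0 1)) {η : ℝ}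
    (hη : 0 < η) : ∃ u : ℕ → ℝ, (∀ n, u n ∈ Set.Ioo (0 : ℝ) 1) ∧ Antitone u ∧
      ∀ n, dist (V (u n)) (V (u (n + 1))) + (u n - u (n + 1)) = η * u (n + 1) := by
  choose! next hnext heq using fun (l : ℝ) (hl : l ∈ Set.Ioo (0 : ℝ) 1) =>
    exists_dist_add_sub_eq_mul hcont hη hl
  let u (n : ℕ) : ℝ := next^[n] (1 / 2)
  have hsucc (n : ℕ) : u (n + 1) = next (u n) := Function.iterate_succ_apply' _ _ _
  have hmem (n : ℕ) : u n ∈ Set.Ioo (0 : ℝ) 1 := by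
    induction n with
    | zero => norm_num [u]
    | succ n ih =>
      rw [hsucc]
      exact ⟨(hnext _ ih).1, (hnext _ ih).2.trans ih.2⟩
  refine ⟨u, hmem, antitone_nat_of_succ_le fun n => ?_, fun n => ?_⟩
  · exact hsucc n ▸ (hnext _ (hmem n)).2.le
  · exact hsucc n ▸ heq _ (hmem n)

theorem summable_of_dist_add_sub_eq_mul (hV : BoundedVariationOn V (Set.Ioo 0 1)) {η : ℝ}
    (hη : 0 < η) {u : ℕ → ℝ} (hmem : ∀ n, u n ∈ Set.Ioo (0 : ℝ) 1) (hanti : Antitone u)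
    (heq : ∀ n, dist (V (u n)) (V (u (n + 1))) + (u n - u (n + 1)) = η * u (n + 1)) :
    Summable u := by
  refine (summable_nat_add_iff 1).1 <| summable_of_sum_range_le (fun n => (hmem _).1.le)
    (c := ((eVariationOn V (Set.Ioo 0 1)).toReal + 1) / η) fun n => ?_
  rw [le_div_iff₀ hη, mul_comm, Finset.mul_sum, ← Finset.sum_congr rfl fun i _ => heq i,
    Finset.sum_add_distrib, Finset.sum_range_sub']
  linarith [sum_dist_le_of_antitone hV hanti hmem n, (hmem 0).2, (hmem n).1]

theorem isSlowSchedule_of_dist_add_sub_eq_mul {ε : ℝ} (hε : 0 < ε) (hε1 : ε ≤ 1) {W : ℕ}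
    {u : ℕ → ℝ} (hmem : ∀ n, u n ∈ Set.Ioo (0 : ℝ) 1) (hanti : Antitone u)
    (hsum : ∀ n, ∑ i ∈ Finset.range n, u i ≤ ε)
    (heq : ∀ n, dist (V (u n)) (V (u (n + 1))) + (u n - u (n + 1)) =
      ε / (2 * (W + 1)) * u (n + 1)) :
    IsSlowSchedule V ε W u := by
  have hforward (m k : ℕ) (hk : k ≤ W) :
      dist (V (u m)) (V (u (m + k))) + (u m - u (m + k)) ≤ ε / 2 * u m := by
    have hu := (hmem m).1
    calc dist (V (u m)) (V (u (m + k))) + (u m - u (m + k))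
        ≤ ∑ i ∈ Finset.range k, dist (V (u (m + i))) (V (u (m + (i + 1)))) +
            ∑ i ∈ Finset.range k, (u (m + i) - u (m + (i + 1))) := by
          rw [Finset.sum_range_sub' fun i => u (m + i)]
          exact add_le_add (dist_le_range_sum_dist (fun i => V (u (m + i))) k) le_rfl
      _ = ∑ i ∈ Finset.range k, ε / (2 * (W + 1)) * u (m + (i + 1)) := by
          rw [← Finset.sum_add_distrib]
          exact Finset.sum_congr rfl fun i _ => heq (m + i)
      _ ≤ k * (ε / (2 * (W + 1)) * u m) := by
          rw [← nsmul_eq_mul]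
          refine (Finset.sum_le_card_nsmul _ _ _ fun i _ => ?_).trans_eq (by rw [Finset.card_range])
          exact mul_le_mul_of_nonneg_left (hanti (Nat.le_add_right m _)) (by positivity)
      _ ≤ (W + 1) * (ε / (2 * (W + 1)) * u m) := by
          gcongr
          exact_mod_cast hk.trans W.le_succ
      _ = ε / 2 * u m := by field_simp
  refine ⟨hmem, hanti, hsum, fun j m hjm hmj => ?_⟩
  rcases le_total m j with h | h
  · obtain ⟨k, rfl⟩ := Nat.exists_eq_add_of_le h
    have := hforward m k (by lia)
    rw [dist_comm, abs_sub_comm, abs_of_nonneg (sub_nonneg.2 (hanti h))]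
    nlinarith [(hmem m).1]
  · obtain ⟨k, rfl⟩ := Nat.exists_eq_add_of_le h
    have := hforward j k (by lia)
    have hdist := dist_nonneg (x := V (u j)) (y := V (u (j + k)))
    have hhalf : u j ≤ 2 * u (j + k) := by nlinarith [(hmem j).1]
    rw [abs_of_nonneg (sub_nonneg.2 (hanti h))]
    nlinarith

theorem exists_isSlowSchedule (hcont : ContinuousOn V (Set.Ioo 0 1))
    (hV : BoundedVariationOn V (Set.Ioo 0 1)) {ε : ℝ} (hε : 0 < ε) (hε1 : ε ≤ 1) (W : ℕ) :
    ∃ u, IsSlowSchedule V ε W u := by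
  have hη : 0 < ε / (2 * (W + 1)) := by positivity
  obtain ⟨u, hmem, hanti, heq⟩ := exists_seq_dist_add_sub_eq_mul hcont hη
  have hsummable := summable_of_dist_add_sub_eq_mul hV hη hmem hanti heq
  obtain ⟨N, hN⟩ := ((tendsto_order.1 (tendsto_sum_nat_add u)).2 ε hε).exists
  refine ⟨fun n => u (n + N), isSlowSchedule_of_dist_add_sub_eq_mul hε hε1 (fun n => hmem _)
    (fun a b h => hanti (Nat.add_le_add_right h N)) (fun n => ?_) fun n => ?_⟩
  · exact (((summable_nat_add_iff N).2 hsummable).sum_le_tsum _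
      fun i _ => (hmem _).1.le).trans hN.le
  · simpa only [Nat.succ_add] using heq (n + N)

theorem IsSlowSchedule.mul_sub_le_sum_sub_sum {ε : ℝ} {W : ℕ} {u : ℕ → ℝ}
    (hu : IsSlowSchedule V ε W u) {j m : ℕ} (hjm : j ≤ m + W) (hmj : m ≤ j + W) :
    u m * (j - m) - ε * u m * |(j : ℝ) - m| ≤
      ∑ i ∈ Finset.range j, u i - ∑ i ∈ Finset.range m, u i := by
  have hnear (i : ℕ) (him : i ≤ m + W) (hmi : m ≤ i + W) : |u i - u m| ≤ ε * u m :=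
    (le_add_of_nonneg_left dist_nonneg).trans (hu.dist_add_abs_le i m him hmi)
  rcases le_total m j with h | h
  · obtain ⟨k, rfl⟩ := Nat.exists_eq_add_of_le h
    have hsum : k • (u m - ε * u m) ≤ ∑ i ∈ Finset.range k, u (m + i) := by
      refine (Finset.card_nsmul_le_sum _ _ _ fun i hi => ?_).trans_eq' (by rw [Finset.card_range])
      have := Finset.mem_range.1 hi
      linarith [(abs_le.1 (hnear (m + i) (by lia) (by lia))).1]
    rw [nsmul_eq_mul] at hsum
    rw [Finset.sum_range_add, add_sub_cancel_left, Nat.cast_add, add_sub_cancel_left, Nat.abs_cast]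
    linarith
  · obtain ⟨k, rfl⟩ := Nat.exists_eq_add_of_le h
    have hsum : ∑ i ∈ Finset.range k, u (j + i) ≤ k • (u (j + k) + ε * u (j + k)) := by
      refine (Finset.sum_le_card_nsmul _ _ _ fun i hi => ?_).trans_eq (by rw [Finset.card_range])
      have := Finset.mem_range.1 hi
      linarith [(abs_le.1 (hnear (j + i) (by lia) (by lia))).2]
    rw [nsmul_eq_mul] at hsum
    rw [Finset.sum_range_add, sub_add_cancel_left, Nat.cast_add, sub_add_cancel_left, abs_neg,
      Nat.abs_cast]
    linarith

end SlowSchedule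

/-! ### Counter strategies -/

section CounterUpdate

/-- The counter `m`, moved by `L * x` rounded up, but never below `0`. -/
def counterUpdate (L m : ℕ) (x : ℝ) : ℕ := (m + ⌈L * x⌉).toNat

variable {L m : ℕ} {x : ℝ}

theorem mul_le_counterUpdate_sub : L * x ≤ counterUpdate L m x - m := by
  have hle : m + ⌈L * x⌉ ≤ (counterUpdate L m x : ℤ) := Int.self_le_toNat _
  have hceil := Int.le_ceil (L * x)
  have : (m + ⌈L * x⌉ : ℝ) ≤ counterUpdate L m x := by exact_mod_cast hle
  linarith

theorem counterUpdate_le_add (hx : x ≤ 2) : counterUpdate L m x ≤ m + 2 * L := by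
  have hceil : ⌈L * x⌉ ≤ 2 * L := by
    rw [Int.ceil_le]
    push_cast
    nlinarith [L.cast_nonneg (α := ℝ)]
  rw [counterUpdate]
  lia

theorem neg_le_ceil_mul (hx : -1 ≤ x) : -(L : ℤ) ≤ ⌈L * x⌉ := by
  have hceil := Int.le_ceil (L * x)
  have : -(L : ℝ) ≤ ⌈L * x⌉ := by nlinarith [L.cast_nonneg (α := ℝ)]
  exact_mod_cast this

theorem le_counterUpdate_add (hx : -1 ≤ x) : m ≤ counterUpdate L m x + L := by
  have := neg_le_ceil_mul (L := L) hx
  rw [counterUpdate]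
  lia

theorem counterUpdate_sub_le (hm : L ≤ m) (hx : -1 ≤ x) :
    counterUpdate L m x - m ≤ L * x + 1 := by
  have hlow := neg_le_ceil_mul (L := L) hx
  have hceil := Int.ceil_lt_add_one (L * x)
  have heq : (counterUpdate L m x : ℤ) = m + ⌈L * x⌉ := Int.toNat_of_nonneg (by lia)
  have : (counterUpdate L m x : ℝ) = m + ⌈L * x⌉ := by exact_mod_cast heq
  linarith

theorem counterUpdate_sub_le_add (hx : -1 ≤ x) :
    counterUpdate L m x - m ≤ L * x + 1 + L := by
  have hle : (counterUpdate L m x : ℤ) ≤ m + ⌈L * x⌉ + L := by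
    have := neg_le_ceil_mul (L := L) hx
    rw [counterUpdate]
    lia
  have hceil := Int.ceil_lt_add_one (L * x)
  have : (counterUpdate L m x : ℝ) ≤ m + ⌈L * x⌉ + L := by exact_mod_cast hle
  linarith

end CounterUpdate

namespace DeterministicGame

variable {S I J : Type*} [Fintype S] [Fintype I] [Nonempty I] [Fintype J] [Nonempty J]
  (G : DeterministicGame S I J) (L : ℕ) (ε : ℝ) (u : ℕ → ℝ)

/-- The state of the game together with the counter that selects the discount `u m`. In the spirit
of Mertens and Neyman, the counter moves up, towards patience, when the stage payoff exceeds the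
discounted value and moves down when it falls short of it. -/
def counterStep (a : S × ℕ) (b : I × J) : S × ℕ :=
  let s := G.next a.1 b.1 b.2
  (s, counterUpdate L a.2 (G.reward a.1 b.1 b.2 - G.discountedValue (u a.2) s + 4 * ε))

/-- The discounted value at the current state and counter, corrected by the sum of the
discounts at the lower counters. -/
def counterPotential (a : S × ℕ) : ℝ :=
  G.discountedValue (u a.2) a.1 + (∑ i ∈ Finset.range a.2, u i) / L

/-- A lower bound for the total payoff that the counter strategy secures in `n` stages. -/
def counterBound (n : ℕ) (a : S × ℕ) : ℝ :=
  n * (G.counterPotential L u a - 8 * ε) + 1 / (ε * u L) * (G.counterPotential L u a - 2) - a.2 / L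

variable {G L ε u}

theorem counterPotential_le (hu : IsSlowSchedule G.discountedValue ε (2 * L) u) (hL : 1 ≤ L)
    (hε : ε ≤ 1) (a : S × ℕ) : G.counterPotential L u a ≤ 2 := by
  have hvalue := (G.discountedValue_mem_Icc (hu.mem_Ioo a.2)).2 a.1
  have hspent := hu.sum_div_le hL a.2
  rw [counterPotential]
  simp only [Pi.one_apply] at hvalue
  linarith

theorem reward_sub_discountedValue_add_mem_Icc (hu : IsSlowSchedule G.discountedValue ε (2 * L) u)
    (hε : 0 ≤ ε) (hε1 : 4 * ε ≤ 1) (m : ℕ) (s s' : S) (i : I) (j : J) :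
    G.reward s i j - G.discountedValue (u m) s' + 4 * ε ∈ Set.Icc (-1 : ℝ) 2 := by
  have hreward := G.reward_mem s i j
  have hvalue := G.discountedValue_mem_Icc (hu.mem_Ioo m)
  have hvalue₀ : 0 ≤ G.discountedValue (u m) s' := hvalue.1 s'
  have hvalue₁ : G.discountedValue (u m) s' ≤ 1 := hvalue.2 s'
  constructor <;> linarith [hreward.1, hreward.2]

theorem auxMatrix_add_le_counterPotential (hu : IsSlowSchedule G.discountedValue ε (2 * L) u)
    (hL : 1 ≤ L) (hε : 0 ≤ ε) (hε1 : 4 * ε ≤ 1) (s : S) (m : ℕ) (i : I) (j : J) :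
    G.auxMatrix (u m) (G.discountedValue (u m)) s i j + (∑ i ∈ Finset.range m, u i) / L +
      ε * u m ≤ G.counterPotential L u (G.counterStep L ε u (s, m) (i, j)) := by
  have hLpos : (0 : ℝ) < L := by exact_mod_cast hL
  set s' := G.next s i j
  set x := G.reward s i j - G.discountedValue (u m) s' + 4 * ε with hx
  have hxmem : x ∈ Set.Icc (-1 : ℝ) 2 := reward_sub_discountedValue_add_mem_Icc hu hε hε1 m s s' i j
  set m' := counterUpdate L m x
  have hup : m' ≤ m + 2 * L := counterUpdate_le_add hxmem.2
  have hdown : m ≤ m' + 2 * L := by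
    have : m ≤ m' + L := le_counterUpdate_add hxmem.1
    lia
  have hupd : L * x ≤ m' - m := mul_le_counterUpdate_sub
  have hum := (hu.mem_Ioo m).1
  have hvalue : G.discountedValue (u m) s' - ε * u m ≤ G.discountedValue (u m') s' := by
    have hdist := (dist_le_pi_dist _ _ s').trans
      ((le_add_of_nonneg_right (abs_nonneg _)).trans (hu.dist_add_abs_le m' m hup hdown))
    linarith [(abs_le.1 hdist).1]
  have hspent : (∑ i ∈ Finset.range m, u i) / L + u m * x - 2 * ε * u m ≤
      (∑ i ∈ Finset.range m', u i) / L := by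
    have habs : |(m' : ℝ) - m| ≤ 2 * L := by
      rw [abs_le]
      constructor
      · have : (m : ℝ) ≤ m' + 2 * L := by exact_mod_cast hdown
        linarith
      · have : (m' : ℝ) ≤ m + 2 * L := by exact_mod_cast hup
        linarith
    have hsum := hu.mul_sub_le_sum_sub_sum hup hdown
    have hgain := mul_le_mul_of_nonneg_left hupd hum.le
    have hloss := mul_le_mul_of_nonneg_left habs (mul_nonneg hε hum.le)
    rw [le_div_iff₀ hLpos, sub_mul, add_mul, div_mul_cancel₀ _ hLpos.ne']
    linarith
  calc G.auxMatrix (u m) (G.discountedValue (u m)) s i j + (∑ i ∈ Finset.range m, u i) / L +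
        ε * u m
      = (G.discountedValue (u m) s' - ε * u m) +
        ((∑ i ∈ Finset.range m, u i) / L + u m * x - 2 * ε * u m) := by
        simp only [auxMatrix, Matrix.of_apply, hx, s']
        ring
    _ ≤ G.discountedValue (u m') s' + (∑ i ∈ Finset.range m', u i) / L := add_le_add hvalue hspent

theorem counterStep_snd_sub_div_le (hu : IsSlowSchedule G.discountedValue ε (2 * L) u)
    (hL : 1 ≤ ε * L) (hε : 0 < ε) (hε1 : 4 * ε ≤ 1) (s : S) (m : ℕ) (i : I) (j : J) :
    ((G.counterStep L ε u (s, m) (i, j)).2 - m : ℝ) / L ≤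
      G.reward s i j - G.discountedValue (u m) (G.next s i j) + 5 * ε + u m / u L := by
  have hLpos : (0 : ℝ) < L := pos_of_mul_pos_right (one_pos.trans_le hL) hε.le
  have hx := reward_sub_discountedValue_add_mem_Icc hu hε.le hε1 m s (G.next s i j) i j
  have hratio : 0 < u m / u L := div_pos (hu.mem_Ioo m).1 (hu.mem_Ioo L).1
  rw [div_le_iff₀ hLpos]
  obtain hm | hm := le_total L m
  · have hupd := counterUpdate_sub_le hm hx.1
    have := mul_pos hratio hLpos
    simp only [counterStep]
    linarith
  · have hupd := counterUpdate_sub_le_add (L := L) (m := m) hx.1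
    have : 1 * (L : ℝ) ≤ u m / u L * L :=
      mul_le_mul_of_nonneg_right ((one_le_div (hu.mem_Ioo L).1).2 (hu.antitone hm)) hLpos.le
    simp only [counterStep]
    linarith

theorem counterBound_zero_le (hu : IsSlowSchedule G.discountedValue ε (2 * L) u) (hL : 1 ≤ L)
    (hε : 0 ≤ ε) (hε1 : ε ≤ 1) (a : S × ℕ) : G.counterBound L ε u 0 a ≤ 0 := by
  have hcoef : 0 ≤ 1 / (ε * u L) := one_div_nonneg.2 (mul_nonneg hε (hu.mem_Ioo L).1.le)
  have hpot := mul_nonpos_of_nonneg_of_nonpos hcoef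
    (sub_nonpos.2 (counterPotential_le hu hL hε1 a))
  have hcount : (0 : ℝ) ≤ a.2 / L := by positivity
  rw [counterBound, Nat.cast_zero, zero_mul]
  linarith

theorem counterBound_succ_add_le (hu : IsSlowSchedule G.discountedValue ε (2 * L) u)
    (hL : 1 ≤ ε * L) (hε : 0 < ε) (hε1 : 4 * ε ≤ 1) (n : ℕ) (s : S) (m : ℕ) (i : I) (j : J) :
    G.counterBound L ε u (n + 1) (s, m) + (n + 1 + 1 / (ε * u L)) *
        (G.auxMatrix (u m) (G.discountedValue (u m)) s i j - G.discountedValue (u m) s) ≤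
      G.reward s i j - ε + G.counterBound L ε u n (G.counterStep L ε u (s, m) (i, j)) := by
  have hLpos : 1 ≤ L := Nat.pos_of_ne_zero (by rintro rfl; norm_num at hL)
  have hum := hu.mem_Ioo m
  have hcoef : 0 ≤ 1 / (ε * u L) := one_div_nonneg.2 (mul_nonneg hε.le (hu.mem_Ioo L).1.le)
  have hcoef_mul : 1 / (ε * u L) * (ε * u m) = u m / u L := by
    field_simp [(hu.mem_Ioo L).1.ne']
  have hdrift := mul_le_mul_of_nonneg_left
    (auxMatrix_add_le_counterPotential hu hLpos hε.le hε1 s m i j) (add_nonneg n.cast_nonneg hcoef)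
  have hcount := counterStep_snd_sub_div_le hu hL hε hε1 s m i j
  have hspent := hu.sum_div_le hLpos m
  have haux : G.auxMatrix (u m) (G.discountedValue (u m)) s i j ≤
      G.discountedValue (u m) (G.next s i j) + ε := by
    have hvalue : 0 ≤ G.discountedValue (u m) (G.next s i j) :=
      (G.discountedValue_mem_Icc hum).1 _
    have := mul_le_of_le_one_right hum.1.le
      ((sub_le_self _ hvalue).trans (G.reward_mem s i j).2)
    simp only [auxMatrix, Matrix.of_apply]
    linarith [hu.apply_le m]
  have hn : 0 ≤ n * (ε * u m) := by have := hum.1; positivity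
  rw [sub_div] at hcount
  simp only [counterBound, Nat.cast_add, Nat.cast_one]
  rw [counterPotential]
  linarith

theorem counterBound_succ_le_dotProduct (hu : IsSlowSchedule G.discountedValue ε (2 * L) u)
    (hL : 1 ≤ ε * L) (hε : 0 < ε) (hε1 : 4 * ε ≤ 1) (n : ℕ) {s : S} {m : ℕ} {j : J} {x : I → ℝ}
    (hx : x ∈ stdSimplex ℝ I) (hxv : G.discountedValue (u m) s ≤
      x ⬝ᵥ fun i => G.auxMatrix (u m) (G.discountedValue (u m)) s i j) :
    G.counterBound L ε u (n + 1) (s, m) ≤ x ⬝ᵥ fun i =>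
      G.reward s i j - ε + G.counterBound L ε u n (G.counterStep L ε u (s, m) (i, j)) := by
  set A := fun i => G.auxMatrix (u m) (G.discountedValue (u m)) s i j
  set v := G.discountedValue (u m) s
  set b := G.counterBound L ε u (n + 1) (s, m)
  set c := n + 1 + 1 / (ε * u L)
  have hc : 0 ≤ c := add_nonneg (by positivity)
    (one_div_nonneg.2 (mul_nonneg hε.le (hu.mem_Ioo L).1.le))
  calc b ≤ b + c * (x ⬝ᵥ A - v) := le_add_of_nonneg_right (mul_nonneg hc (sub_nonneg.2 hxv))
    _ = x ⬝ᵥ (c • A + fun _ => b - c * v) := by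
      rw [dotProduct_add, dotProduct_smul, dotProduct_const_of_mem_stdSimplex hx, smul_eq_mul]
      ring
    _ ≤ _ := dotProduct_le_dotProduct_of_nonneg_left (fun i => ?_) hx.1
  calc (c • A + fun _ => b - c * v : I → ℝ) i = b + c * (A i - v) := by
        simp only [Pi.add_apply, Pi.smul_apply, smul_eq_mul]
        ring
    _ ≤ _ := counterBound_succ_add_le hu hL hε hε1 n s m i j

end DeterministicGame

/-! ### From the automaton to the state-blind game -/

section PMF

variable {ι : Type*} [Fintype ι]

theorem toReal_pmf_mem_stdSimplex (p : PMF ι) : (fun i => (p i).toReal) ∈ stdSimplex ℝ ι := by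
  refine ⟨fun i => ENNReal.toReal_nonneg, ?_⟩
  rw [← ENNReal.toReal_sum fun i _ => p.apply_ne_top i, ← tsum_fintype (L := .unconditional ι),
    p.tsum_coe, ENNReal.toReal_one]

theorem exists_pmf_toReal_eq {x : ι → ℝ} (hx : x ∈ stdSimplex ℝ ι) :
    ∃ p : PMF ι, ∀ i, (p i).toReal = x i := by
  refine ⟨PMF.ofFintype (fun i => ENNReal.ofReal (x i)) ?_, fun i => ?_⟩
  · rw [← ENNReal.ofReal_sum_of_nonneg fun i _ => hx.1 i, hx.2, ENNReal.ofReal_one]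
  · rw [PMF.ofFintype_apply, ENNReal.toReal_ofReal (hx.1 i)]

end PMF

section StateBlind

variable {K I J : Type*} [Fintype K]

/-- The belief on the states reached from `p` along the history `h`. -/
def belief (q : K → I → J → K → ℝ) (p : K → ℝ) (h : List (I × J)) : K → ℝ :=
  h.foldl (fun p a => qTilde q p a.1 a.2) p

theorem belief_append_singleton (q : K → I → J → K → ℝ) (p : K → ℝ) (h : List (I × J)) (i : I)
    (j : J) : belief q p (h ++ [(i, j)]) = qTilde q (belief q p h) i j :=
  List.foldl_append

variable [Fintype I] [Fintype J]

/-- Player 1 has a strategy whose total payoff over `n` stages is at least `n * w` up to an error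
that does not depend on `n`. -/
def GuaranteesAtLeast (q : K → I → J → K → ℝ) (g : K → I → J → ℝ) (p : K → ℝ) (w : ℝ) : Prop :=
  ∃ (σ : List (I × J) → PMF I) (C : ℝ), ∀ τ n, n * w - C ≤ expPaySB q g σ τ n p []

/-- Player 2 has a strategy that keeps the total payoff over `n` stages below `n * w` up to an
error that does not depend on `n`. -/
def GuaranteesAtMost (q : K → I → J → K → ℝ) (g : K → I → J → ℝ) (p : K → ℝ) (w : ℝ) : Prop :=
  ∃ (τ : List (I × J) → PMF J) (C : ℝ), ∀ σ n, expPaySB q g σ τ n p [] ≤ n * w + C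

theorem le_expPaySB {q : K → I → J → K → ℝ} {g : K → I → J → ℝ} {p : K → ℝ}
    {σ : List (I × J) → PMF I} {F : ℕ → List (I × J) → ℝ} (hzero : ∀ h, F 0 h ≤ 0)
    (hsucc : ∀ n h j, F (n + 1) h ≤
      (fun i => (σ h i).toReal) ⬝ᵥ fun i => gTilde g (belief q p h) i j + F n (h ++ [(i, j)]))
    (τ : List (I × J) → PMF J) (n : ℕ) (h : List (I × J)) :
    F n h ≤ expPaySB q g σ τ n (belief q p h) h := by
  induction n generalizing h with
  | zero => exact hzero h
  | succ n ih =>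
    calc F (n + 1) h
        ≤ (fun j => (τ h j).toReal) ⬝ᵥ fun j => (fun i => (σ h i).toReal) ⬝ᵥ fun i =>
          gTilde g (belief q p h) i j +
            expPaySB q g σ τ n (qTilde q (belief q p h) i j) (h ++ [(i, j)]) := by
          refine le_dotProduct_of_mem_stdSimplex (toReal_pmf_mem_stdSimplex _) fun j =>
            (hsucc n h j).trans (dotProduct_le_dotProduct_of_nonneg_left (fun i => ?_)
              (toReal_pmf_mem_stdSimplex (σ h)).1)
          rw [← belief_append_singleton]
          exact add_le_add_right (ih _) _
      _ = expPaySB q g σ τ (n + 1) (belief q p h) h := by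
          simp only [expPaySB, dotProduct, Finset.mul_sum]
          rw [Finset.sum_comm]
          exact Finset.sum_congr rfl fun i _ => Finset.sum_congr rfl fun j _ => by ring

end StateBlind

namespace DeterministicGame

variable {S I J : Type*} (G : DeterministicGame S I J)

/-- The state reached from `s` along the history `h`. -/
def run (s : S) (h : List (I × J)) : S := h.foldl (fun s a => G.next s a.1 a.2) s

variable {K : Type*} [Fintype K]

/-- Started at `s₀`, the game `G` predicts along every history the expected stage payoffs of the
state-blind game started at `p₁`, with error at most `ε`. -/
def Approximates (s₀ : S) (q : K → I → J → K → ℝ) (g : K → I → J → ℝ) (p₁ : K → ℝ) (ε : ℝ) : Prop :=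
  ∀ h i j, |gTilde g (belief q p₁ h) i j - G.reward (G.run s₀ h) i j| ≤ ε

variable [Fintype S] [Fintype I] [Nonempty I] [Fintype J] [Nonempty J] {G} {L : ℕ} {ε : ℝ}
  {u : ℕ → ℝ}

theorem fst_foldl_counterStep (a : S × ℕ) (h : List (I × J)) :
    (h.foldl (G.counterStep L ε u) a).1 = G.run a.1 h := by
  induction h generalizing a with
  | nil => rfl
  | cons _ _ ih => exact ih _

theorem exists_pmf_discountedValue_le {l : ℝ} (hl : l ∈ Set.Ioo (0 : ℝ) 1) (s : S) :
    ∃ x : PMF I, ∀ j, G.discountedValue l s ≤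
      (fun i => (x i).toReal) ⬝ᵥ fun i => G.auxMatrix l (G.discountedValue l) s i j := by
  obtain ⟨x, hx, -, -, hxv, -⟩ := G.isMatrixGameValue_discountedValue hl s
  obtain ⟨X, hX⟩ := exists_pmf_toReal_eq hx
  exact ⟨X, fun j => by simpa only [hX, Matrix.vecMul] using hxv j⟩

theorem Approximates.guaranteesAtLeast {s₀ : S} {q : K → I → J → K → ℝ} {g : K → I → J → ℝ}
    {p₁ : K → ℝ} (hG : G.Approximates s₀ q g p₁ ε)
    (hu : IsSlowSchedule G.discountedValue ε (2 * L) u) (hL : 1 ≤ ε * L) (hε : 0 < ε)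
    (hε1 : 4 * ε ≤ 1) : GuaranteesAtLeast q g p₁ (G.discountedValue (u 0) s₀ - 8 * ε) := by
  have hLpos : 1 ≤ L := Nat.pos_of_ne_zero (by rintro rfl; norm_num at hL)
  choose x hx using fun a : S × ℕ => G.exists_pmf_discountedValue_le (hu.mem_Ioo a.2) a.1
  let a (h : List (I × J)) : S × ℕ := h.foldl (G.counterStep L ε u) (s₀, 0)
  have hcoef : 0 ≤ 1 / (ε * u L) := one_div_nonneg.2 (mul_nonneg hε.le (hu.mem_Ioo L).1.le)
  have hstep (n : ℕ) (h : List (I × J)) (j : J) : G.counterBound L ε u (n + 1) (a h) ≤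
      (fun i => (x (a h) i).toReal) ⬝ᵥ fun i =>
        gTilde g (belief q p₁ h) i j + G.counterBound L ε u n (a (h ++ [(i, j)])) := by
    refine (counterBound_succ_le_dotProduct hu hL hε hε1 n (toReal_pmf_mem_stdSimplex _)
      (hx (a h) j)).trans (dotProduct_le_dotProduct_of_nonneg_left (fun i => ?_)
        (toReal_pmf_mem_stdSimplex (x (a h))).1)
    have hpay := (abs_le.1 (hG h i j)).1
    have hstate : (a h).1 = G.run s₀ h := fst_foldl_counterStep _ _
    have hnext : a (h ++ [(i, j)]) = G.counterStep L ε u (a h) (i, j) := List.foldl_append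
    rw [← hstate] at hpay
    simp only [hnext]
    linarith
  have hbound := le_expPaySB (F := fun n h => G.counterBound L ε u n (a h))
    (fun h => counterBound_zero_le hu hLpos hε.le (by linarith) (a h)) hstep
  refine ⟨fun h => x (a h), 1 / (ε * u L) * 2, fun τ n => le_trans ?_ (hbound τ n [])⟩
  have hvalue : 0 ≤ G.discountedValue (u 0) s₀ := (G.discountedValue_mem_Icc (hu.mem_Ioo 0)).1 s₀
  have hinit : G.counterBound L ε u n (s₀, 0) = n * (G.discountedValue (u 0) s₀ - 8 * ε) +
      1 / (ε * u L) * (G.discountedValue (u 0) s₀ - 2) := by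
    simp [counterBound, counterPotential]
  rw [show a [] = (s₀, 0) from rfl, hinit]
  linarith [mul_nonneg hcoef hvalue]

end DeterministicGame

/-! ### Exchanging the players -/

section SwapPlayers

variable {K I J : Type*} [Fintype K] {q : K → I → J → K → ℝ}

theorem qTilde_mem_stdSimplex (hq : ∀ k i j, q k i j ∈ stdSimplex ℝ K) {p : K → ℝ}
    (hp : p ∈ stdSimplex ℝ K) (i : I) (j : J) : qTilde q p i j ∈ stdSimplex ℝ K := by
  refine ⟨fun k => Finset.sum_nonneg fun k' _ => mul_nonneg (hp.1 k') ((hq k' i j).1 k), ?_⟩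
  simp only [qTilde]
  rw [Finset.sum_comm]
  simp only [← Finset.mul_sum, (hq _ i j).2, mul_one, hp.2]

theorem belief_mem_stdSimplex (hq : ∀ k i j, q k i j ∈ stdSimplex ℝ K) {p : K → ℝ}
    (hp : p ∈ stdSimplex ℝ K) (h : List (I × J)) : belief q p h ∈ stdSimplex ℝ K := by
  induction h generalizing p with
  | nil => exact hp
  | cons a _ ih => exact ih (qTilde_mem_stdSimplex hq hp a.1 a.2)

theorem belief_swap (p : K → ℝ) (h : List (J × I)) :
    belief (fun k j i => q k i j) p h = belief q p (h.map Prod.swap) := by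
  rw [belief, belief, List.foldl_map]
  rfl

theorem gTilde_one_sub_swap (g : K → I → J → ℝ) {p : K → ℝ} (hp : p ∈ stdSimplex ℝ K) (i : I)
    (j : J) : gTilde (fun k j i => 1 - g k i j) p j i = 1 - gTilde g p i j := by
  simp only [gTilde, mul_sub, mul_one, Finset.sum_sub_distrib, hp.2]

variable [Fintype I] [Fintype J]

theorem expPaySB_swap (hq : ∀ k i j, q k i j ∈ stdSimplex ℝ K) (g : K → I → J → ℝ)
    (σ : List (I × J) → PMF I) (τ : List (J × I) → PMF J) (n : ℕ) {p : K → ℝ}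
    (hp : p ∈ stdSimplex ℝ K) (h : List (I × J)) :
    expPaySB q g σ (fun h => τ (h.map Prod.swap)) n p h =
      n - expPaySB (fun k j i => q k i j) (fun k j i => 1 - g k i j) τ
        (fun h => σ (h.map Prod.swap)) n p (h.map Prod.swap) := by
  induction n generalizing p h with
  | zero => simp [expPaySB]
  | succ n ih =>
    have hinvol : (h.map Prod.swap).map Prod.swap = h := by simp
    have hσ := (toReal_pmf_mem_stdSimplex (σ h)).2
    have hτ := (toReal_pmf_mem_stdSimplex (τ (h.map Prod.swap))).2
    rw [expPaySB, expPaySB, eq_sub_iff_add_eq, Finset.sum_comm, ← Finset.sum_add_distrib]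
    simp only [← Finset.sum_add_distrib, hinvol]
    calc _ = ∑ j, ∑ i, (τ (h.map Prod.swap) j).toReal * ((σ h i).toReal * (n + 1 : ℕ)) := by
          refine Finset.sum_congr rfl fun j _ => Finset.sum_congr rfl fun i _ => ?_
          have hswap : qTilde (fun k j i => q k i j) p j i = qTilde q p i j := rfl
          rw [ih (qTilde_mem_stdSimplex hq hp i j), gTilde_one_sub_swap g hp, hswap]
          simp only [List.map_append, List.map_cons, List.map_nil, Prod.swap_prod_mk]
          push_cast
          ring
      _ = (n + 1 : ℕ) := by simp only [← Finset.mul_sum, ← Finset.sum_mul, hσ, hτ, one_mul]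

theorem GuaranteesAtLeast.guaranteesAtMost_swap (hq : ∀ k i j, q k i j ∈ stdSimplex ℝ K)
    {g : K → I → J → ℝ} {p : K → ℝ} (hp : p ∈ stdSimplex ℝ K) {w : ℝ}
    (h : GuaranteesAtLeast (fun k j i => q k i j) (fun k j i => 1 - g k i j) p w) :
    GuaranteesAtMost q g p (1 - w) := by
  obtain ⟨τ, C, hτ⟩ := h
  refine ⟨fun h => τ (h.map Prod.swap), C, fun σ n => ?_⟩
  rw [expPaySB_swap hq g σ τ n hp]
  have := hτ (fun h => σ (h.map Prod.swap)) n
  simp only [List.map_nil]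
  linarith

end SwapPlayers

namespace DeterministicGame

variable {S K I J : Type*} [Fintype K] {G : DeterministicGame S I J} {s₀ : S}
  {q : K → I → J → K → ℝ} {g : K → I → J → ℝ} {p₁ : K → ℝ} {ε : ℝ}

theorem Approximates.swap (hG : G.Approximates s₀ q g p₁ ε)
    (hq : ∀ k i j, q k i j ∈ stdSimplex ℝ K) (hp₁ : p₁ ∈ stdSimplex ℝ K) :
    G.swap.Approximates s₀ (fun k j i => q k i j) (fun k j i => 1 - g k i j) p₁ ε := by
  intro h j i
  have hreward : G.swap.reward (G.swap.run s₀ h) j i =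
      1 - G.reward (G.run s₀ (h.map Prod.swap)) i j := by
    rw [run, run, List.foldl_map]
    rfl
  rw [hreward, belief_swap, gTilde_one_sub_swap g (belief_mem_stdSimplex hq hp₁ _),
    sub_sub_sub_cancel_left, abs_sub_comm]
  exact hG (h.map Prod.swap) i j

variable [Fintype S] [Fintype I] [Nonempty I] [Fintype J] [Nonempty J]

theorem isSlowSchedule_swap {W : ℕ} {u : ℕ → ℝ} (hu : IsSlowSchedule G.discountedValue ε W u) :
    IsSlowSchedule G.swap.discountedValue ε W u where
  mem_Ioo := hu.mem_Ioo
  antitone := hu.antitone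
  sum_le := hu.sum_le
  dist_add_abs_le j m hjm hmj := by
    rw [G.swap_discountedValue (hu.mem_Ioo j), G.swap_discountedValue (hu.mem_Ioo m),
      dist_sub_left]
    exact hu.dist_add_abs_le j m hjm hmj

theorem Approximates.exists_guarantees {S : Type*} [Finite S] {G : DeterministicGame S I J} {s₀ : S}
    (hG : G.Approximates s₀ q g p₁ ε)
    (hq : ∀ k i j, q k i j ∈ stdSimplex ℝ K) (hp₁ : p₁ ∈ stdSimplex ℝ K) (hε : 0 < ε)
    (hε1 : 4 * ε ≤ 1) :
    ∃ w, GuaranteesAtLeast q g p₁ (w - 8 * ε) ∧ GuaranteesAtMost q g p₁ (w + 8 * ε) := by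
  have := Fintype.ofFinite S
  obtain ⟨L, hL⟩ : ∃ L : ℕ, 1 ≤ ε * L :=
    (exists_nat_ge (1 / ε)).imp fun L hL => (div_le_iff₀' hε).1 hL
  obtain ⟨u, hu⟩ := exists_isSlowSchedule G.continuousOn_discountedValue
    G.boundedVariationOn_discountedValue hε (by linarith) (2 * L)
  refine ⟨G.discountedValue (u 0) s₀, hG.guaranteesAtLeast hu hL hε hε1, ?_⟩
  have hswap := ((hG.swap hq hp₁).guaranteesAtLeast
    (isSlowSchedule_swap hu) hL hε hε1).guaranteesAtMost_swap hq hp₁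
  rw [G.swap_discountedValue (hu.mem_Ioo 0), Pi.sub_apply, Pi.one_apply] at hswap
  convert hswap using 1
  ring

end DeterministicGame

/-! ### Powers of stochastic matrices -/

theorem sub_pow_succ_of_mul_eq {R : Type*} [Ring R] {x e : R} (hxe : x * e = e) (hex : e * x = e)
    (hee : e * e = e) (n : ℕ) : (x - e) ^ (n + 1) = x ^ (n + 1) - e := by
  induction n with
  | zero => rw [zero_add, pow_one, pow_one]
  | succ n ih =>
    have hpow : e * x ^ (n + 1) = e := by
      clear ih
      induction n with
      | zero => rw [zero_add, pow_one, hex]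
      | succ n ih => rw [pow_succ, ← mul_assoc, ih, hex]
    rw [pow_succ' (x - e), ih, sub_mul, mul_sub, mul_sub, hxe, hee, hpow, sub_self, sub_zero,
      ← pow_succ']

section MeanErgodic

variable {R : Type*} [NormedRing R] [NormedAlgebra ℝ R]

theorem exists_mem_closedConvexHull_pow_mul_eq {b : R} {s : Set R} (hs : IsCompact s)
    (hconv : Convex ℝ s) (hb : ∀ n, b ^ (n + 1) ∈ s) :
    ∃ e ∈ closedConvexHull ℝ (Set.range fun n => b ^ (n + 1)), e * b = e := by
  set c := closedConvexHull ℝ (Set.range fun n => b ^ (n + 1))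
  have hcs : c ⊆ s := closedConvexHull_min (Set.range_subset_iff.2 hb) hconv hs.isClosed
  have hcompact : IsCompact c := hs.of_isClosed_subset isClosed_closedConvexHull hcs
  have hiter (n : ℕ) : (· * b)^[n] b = b ^ (n + 1) := by
    simp only [mul_right_iterate, ← pow_succ']
  let avg (n : ℕ) : R := birkhoffAverage ℝ (· * b) id (n + 1) b
  have havg (n : ℕ) : avg n ∈ c := by
    simp only [avg, birkhoffAverage, birkhoffSum, Finset.smul_sum, hiter, id_eq]
    refine convex_closedConvexHull.sum_mem (fun i _ => by positivity) ?_
      fun i _ => subset_closedConvexHull (Set.mem_range_self _)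
    simp [Nat.cast_add_one_ne_zero]
  have hshift (n : ℕ) : avg n * b = birkhoffAverage ℝ (· * b) id (n + 1) (b * b) := by
    simp only [avg, birkhoffAverage, birkhoffSum, smul_mul_assoc, Finset.sum_mul, id_eq,
      mul_right_iterate, mul_assoc, pow_mul_comm']
  obtain ⟨e, he, φ, hφ, hlim⟩ := hcompact.tendsto_subseq havg
  refine ⟨e, he, sub_eq_zero.1 (tendsto_nhds_unique ((hlim.mul_const b).sub hlim) ?_)⟩
  have hbdd : Bornology.IsBounded (Set.range fun n => id ((· * b)^[n] b)) :=
    hs.isBounded.subset (Set.range_subset_iff.2 fun n => by simpa only [id, hiter] using hb n)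
  have := (tendsto_birkhoffAverage_apply_sub_birkhoffAverage ℝ hbdd).comp
    ((tendsto_add_atTop_nat 1).comp hφ.tendsto_atTop)
  simpa only [Function.comp_def, hshift] using this

theorem exists_idempotent_mem_closedConvexHull_pow {b : R} {s : Set R} (hs : IsCompact s)
    (hconv : Convex ℝ s) (hb : ∀ n, b ^ (n + 1) ∈ s) :
    ∃ e ∈ closedConvexHull ℝ (Set.range fun n => b ^ (n + 1)),
      b * e = e ∧ e * b = e ∧ e * e = e := by
  obtain ⟨e, he, heb⟩ := exists_mem_closedConvexHull_pow_mul_eq hs hconv hb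
  have hpow (n : ℕ) : e * b ^ (n + 1) = e := by
    induction n with
    | zero => rw [zero_add, pow_one, heb]
    | succ n ih => rw [pow_succ, ← mul_assoc, ih, heb]
  have hcomm : b * e = e * b :=
    closedConvexHull_min (t := {x | b * x = x * b})
      (Set.range_subset_iff.2 fun n => (Commute.self_pow b _).eq)
      (LinearMap.eqLocus (.mulLeft ℝ b) (.mulRight ℝ b)).convex
      (isClosed_eq (by fun_prop) (by fun_prop)) he
  have hidem : e * e = e :=
    closedConvexHull_min (t := {x | e * x = e}) (Set.range_subset_iff.2 hpow)
      ((convex_singleton e).linear_preimage (.mulLeft ℝ e))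
      (isClosed_eq (by fun_prop) (by fun_prop)) he
  exact ⟨e, he, hcomm.trans heb, heb, hidem⟩

end MeanErgodic

section RowStochastic

open Matrix
open scoped Matrix.Norms.Operator

variable {K : Type*} [Fintype K] [DecidableEq K] {A B E : Matrix K K ℝ}

theorem linfty_opNorm_le_one_of_mem_rowStochastic (hA : A ∈ rowStochastic ℝ K) : ‖A‖ ≤ 1 := by
  rw [← coe_nnnorm, ← NNReal.coe_one, NNReal.coe_le_coe, linfty_opNNNorm_def]
  refine Finset.sup_le fun i _ => ?_
  rw [← NNReal.coe_le_coe, NNReal.coe_sum, NNReal.coe_one, ← sum_row_of_mem_rowStochastic hA i]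
  exact Finset.sum_le_sum fun j _ =>
    (Real.norm_of_nonneg (nonneg_of_mem_rowStochastic hA)).le

theorem isCompact_rowStochastic : IsCompact (rowStochastic ℝ K : Set (Matrix K K ℝ)) := by
  have : ProperSpace (Matrix K K ℝ) := FiniteDimensional.proper_real _
  have hset : (rowStochastic ℝ K : Set (Matrix K K ℝ)) =
      {M | ∀ i j, 0 ≤ M i j} ∩ {M | ∀ i, ∑ j, M i j = 1} := by
    ext M
    exact mem_rowStochastic_iff_sum
  refine (isCompact_closedBall (0 : Matrix K K ℝ) 1).of_isClosed_subset ?_ fun A hA =>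
    mem_closedBall_zero_iff.2 (linfty_opNorm_le_one_of_mem_rowStochastic hA)
  have hentry (i j : K) : Continuous fun M : Matrix K K ℝ => M i j := continuous_id.matrix_elem i j
  rw [hset]
  simp only [Set.ofPred_forall]
  exact (isClosed_iInter fun i => isClosed_iInter fun j =>
    isClosed_le continuous_const (hentry i j)).inter (isClosed_iInter fun i =>
      isClosed_eq (continuous_finsetSum _ fun j _ => hentry i j) continuous_const)

theorem exists_mul_le_of_eq_zero_imp (hB : B ∈ rowStochastic ℝ K)
    (hE : ∀ i j, B i j = 0 → E i j = 0) : ∃ c ∈ Set.Ioo (0 : ℝ) 1, ∀ i j, c * E i j ≤ B i j := by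
  have hsmall : ∀ᶠ c in 𝓝[>] (0 : ℝ), ∀ i j, c * E i j ≤ B i j := by
    refine eventually_all.2 fun i => eventually_all.2 fun j => ?_
    obtain h | h := (nonneg_of_mem_rowStochastic hB (i := i) (j := j)).eq_or_lt
    · exact Eventually.of_forall fun c => by rw [hE i j h.symm, mul_zero, ← h]
    · have hlim : Tendsto (fun c => c * E i j) (𝓝 0) (𝓝 0) :=
        Continuous.tendsto' (by fun_prop) _ _ (zero_mul _)
      exact (hlim.mono_left nhdsWithin_le_nhds).eventually_le_const h
  obtain ⟨c, hcE, hc⟩ := (hsmall.and (Ioo_mem_nhdsGT one_pos)).exists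
  exact ⟨c, hc, hcE⟩

theorem inv_smul_sub_smul_mem_rowStochastic (hB : B ∈ rowStochastic ℝ K)
    (hE : E ∈ rowStochastic ℝ K) {c : ℝ} (hc : c < 1) (hcE : ∀ i j, c * E i j ≤ B i j) :
    (1 - c)⁻¹ • (B - c • E) ∈ rowStochastic ℝ K := by
  have hc' : 0 < 1 - c := sub_pos.2 hc
  refine mem_rowStochastic_iff_sum.2 ⟨fun i j => ?_, fun i => ?_⟩
  · exact mul_nonneg (inv_nonneg.2 hc'.le) (sub_nonneg.2 (hcE i j))
  · simp only [Matrix.smul_apply, Matrix.sub_apply, smul_eq_mul, ← Finset.mul_sum,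
      Finset.sum_sub_distrib, sum_row_of_mem_rowStochastic hB,
      sum_row_of_mem_rowStochastic hE, mul_one, inv_mul_cancel₀ hc'.ne']

/- Doeblin's argument: `B = (1 - c) • Q + c • E` with `Q` stochastic and absorbed by `E`, so that
`B ^ n - E = (1 - c) ^ n • (Q ^ n - E)`. -/
theorem norm_pow_succ_sub_le_of_mul_le (hB : B ∈ rowStochastic ℝ K) (hE : E ∈ rowStochastic ℝ K)
    (hBE : B * E = E) (hEB : E * B = E) (hEE : E * E = E) {c : ℝ} (hc : c < 1)
    (hcE : ∀ i j, c * E i j ≤ B i j) (n : ℕ) :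
    ‖B ^ (n + 1) - E‖ ≤ (1 - c) ^ (n + 1) * 2 := by
  have hc' : 0 < 1 - c := sub_pos.2 hc
  set Q := (1 - c)⁻¹ • (B - c • E) with hQ
  have hQ_mem : Q ∈ rowStochastic ℝ K := inv_smul_sub_smul_mem_rowStochastic hB hE hc hcE
  have hscale : (1 - c)⁻¹ • (E - c • E) = E := by
    rw [eq_comm, eq_inv_smul_iff₀ hc'.ne', sub_smul, one_smul]
  have hQE : Q * E = E := by rw [hQ, smul_mul_assoc, sub_mul, smul_mul_assoc, hBE, hEE, hscale]
  have hEQ : E * Q = E := by rw [hQ, mul_smul_comm, mul_sub, mul_smul_comm, hEB, hEE, hscale]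
  have hBQ : B - E = (1 - c) • (Q - E) := by
    rw [smul_sub, hQ, smul_inv_smul₀ hc'.ne', sub_smul, one_smul]
    abel
  calc ‖B ^ (n + 1) - E‖ = (1 - c) ^ (n + 1) * ‖Q ^ (n + 1) - E‖ := by
        rw [← sub_pow_succ_of_mul_eq hBE hEB hEE, hBQ, smul_pow,
          sub_pow_succ_of_mul_eq hQE hEQ hEE, norm_smul, norm_pow, Real.norm_of_nonneg hc'.le]
    _ ≤ (1 - c) ^ (n + 1) * (1 + 1) := by
        gcongr
        exact norm_sub_le_of_le (linfty_opNorm_le_one_of_mem_rowStochastic (pow_mem hQ_mem _))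
          (linfty_opNorm_le_one_of_mem_rowStochastic hE)
    _ = (1 - c) ^ (n + 1) * 2 := by rw [one_add_one_eq_two]

theorem tendsto_pow_of_mul_le (hB : B ∈ rowStochastic ℝ K) (hE : E ∈ rowStochastic ℝ K)
    (hBE : B * E = E) (hEB : E * B = E) (hEE : E * E = E) {c : ℝ} (hc : c ∈ Set.Ioo (0 : ℝ) 1)
    (hcE : ∀ i j, c * E i j ≤ B i j) : Tendsto (B ^ ·) atTop (𝓝 E) := by
  refine tendsto_iff_norm_sub_tendsto_zero.2 ((tendsto_add_atTop_iff_nat 1).1 ?_)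
  have hgeom : Tendsto (fun n => (1 - c) ^ (n + 1) * 2) atTop (𝓝 0) := by
    rw [tendsto_add_atTop_iff_nat (f := fun n => (1 - c) ^ n * 2) 1, ← zero_mul (2 : ℝ)]
    exact (tendsto_pow_atTop_nhds_zero_of_lt_one (sub_nonneg.2 hc.2.le)
      (sub_lt_self 1 hc.1)).mul_const 2
  exact squeeze_zero (fun _ => norm_nonneg _)
    (norm_pow_succ_sub_le_of_mul_le hB hE hBE hEB hEE hc.2 hcE) hgeom

theorem exists_tendsto_pow_of_eq_zero_imp (hB : B ∈ rowStochastic ℝ K)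
    (hsupp : ∀ n i j, B i j = 0 → (B ^ (n + 1)) i j = 0) :
    ∃ E, Tendsto (B ^ ·) atTop (𝓝 E) := by
  obtain ⟨E, hE, hBE, hEB, hEE⟩ := exists_idempotent_mem_closedConvexHull_pow
    isCompact_rowStochastic convex_rowStochastic fun n => pow_mem hB (n + 1)
  have hE_mem : E ∈ rowStochastic ℝ K :=
    closedConvexHull_min (Set.range_subset_iff.2 fun n => pow_mem hB (n + 1))
      convex_rowStochastic isCompact_rowStochastic.isClosed hE
  have hE_supp (i j : K) (hij : B i j = 0) : E i j = 0 :=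
    closedConvexHull_min (t := entryLinearMap ℝ ℝ i j ⁻¹' {0})
      (Set.range_subset_iff.2 fun n => hsupp n i j hij)
      ((convex_singleton 0).linear_preimage (entryLinearMap ℝ ℝ i j))
      (isClosed_singleton.preimage (entryLinearMap ℝ ℝ i j).continuous_of_finiteDimensional) hE
  obtain ⟨c, hc, hcE⟩ := exists_mul_le_of_eq_zero_imp hB hE_supp
  exact ⟨E, tendsto_pow_of_mul_le hB hE_mem hBE hEB hEE hc hcE⟩

theorem exists_pos_forall_apply_mul_succ_eq {α : Type*} [Finite α] {s : ℕ → α}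
    (hs : ∀ m n k, s m = s n → s (m + k) = s (n + k)) : ∃ N > 0, ∀ k, s (N * (k + 1)) = s N := by
  obtain ⟨a, b, hne, heq⟩ := Finite.exists_ne_map_eq_of_infinite s
  wlog hab : a < b generalizing a b
  · exact this b a hne.symm heq.symm (hne.symm.lt_of_le (not_lt.1 hab))
  obtain ⟨d, rfl⟩ := Nat.exists_eq_add_of_lt hab
  have hper : Function.Periodic (fun n => s (a + n)) (d + 1) := fun n => by
    simpa only [add_assoc, add_left_comm, add_comm] using (hs _ _ n heq).symm
  refine ⟨(a + 1) * (d + 1), by positivity, fun k => ?_⟩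
  obtain ⟨r, hr⟩ : ∃ r, (a + 1) * (d + 1) = a + r := Nat.exists_eq_add_of_le (by nlinarith)
  have := hper.nat_mul (k * (a + 1)) r
  rw [Nat.cast_id, ← add_assoc, ← hr] at this
  rw [← this]
  congr 1
  ring

theorem exists_pos_pow_eq_zero_imp (hA : A ∈ rowStochastic ℝ K) :
    ∃ N > 0, ∀ n i j, (A ^ N) i j = 0 → ((A ^ N) ^ (n + 1)) i j = 0 := by
  let zeros (n : ℕ) : Set (K × K) := {x | (A ^ n) x.1 x.2 = 0}
  have hnonneg (n : ℕ) (i j : K) : 0 ≤ (A ^ n) i j :=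
    nonneg_of_mem_rowStochastic (pow_mem hA n)
  have hzeros (m n k : ℕ) (h : zeros m = zeros n) : zeros (m + k) = zeros (n + k) := by
    have h' (i j : K) : (A ^ m) i j = 0 ↔ (A ^ n) i j = 0 := Set.ext_iff.1 h (i, j)
    ext ⟨i, j⟩
    simp only [zeros, Set.mem_ofPred_eq, pow_add, mul_apply,
      Finset.sum_eq_zero_iff_of_nonneg fun _ _ => mul_nonneg (hnonneg _ _ _) (hnonneg _ _ _),
      mul_eq_zero, h']
  obtain ⟨N, hN, hN_eq⟩ := exists_pos_forall_apply_mul_succ_eq hzeros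
  refine ⟨N, hN, fun n i j hij => ?_⟩
  rw [← pow_mul]
  exact (Set.ext_iff.1 (hN_eq n) (i, j)).2 hij

/- The exponents follow a lasso: they are kept up to `M * D` and then run modulo `D`. -/
theorem exists_reduction_of_tendsto_pow_pow {R : Type*} [NormedRing R] {a e : R}
    (ha : ∀ n, ‖a ^ n‖ ≤ 1) {D : ℕ} (hD : 0 < D) (hlim : Tendsto ((a ^ D) ^ ·) atTop (𝓝 e))
    {η : ℝ} (hη : 0 < η) :
    ∃ (T : ℕ) (red : ℕ → Fin T), (∀ n, red (red n + 1) = red (n + 1)) ∧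
      ∀ n, ‖a ^ n - a ^ (red n : ℕ)‖ ≤ η := by
  obtain ⟨M, hM⟩ := Metric.cauchySeq_iff'.1 hlim.cauchySeq η hη
  have hmod (n : ℕ) : n % D < D := Nat.mod_lt n hD
  refine ⟨M * D + D, fun n => if h : n < M * D then ⟨n, by lia⟩ else
    ⟨M * D + n % D, Nat.add_lt_add_left (hmod n) _⟩, fun n => ?_, fun n => ?_⟩
  · by_cases h : n < M * D
    · simp only [h, dif_pos]
    · have h₁ : ¬M * D + (n % D + 1) < M * D := by lia
      have h₂ : ¬n + 1 < M * D := by lia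
      simp only [h, h₁, h₂, dif_neg, not_false_eq_true, add_assoc,
        Nat.mul_add_mod_self_right, Nat.mod_add_mod]
  · by_cases h : n < M * D
    · simpa only [h, dif_pos, sub_self, norm_zero] using hη.le
    · have hle : M ≤ n / D := (Nat.le_div_iff_mul_le hD).2 (not_lt.1 h)
      simp only [h, dif_neg, not_false_eq_true]
      calc ‖a ^ n - a ^ (M * D + n % D)‖
          = ‖((a ^ D) ^ (n / D) - (a ^ D) ^ M) * a ^ (n % D)‖ := by
            rw [sub_mul, ← pow_mul, ← pow_mul, ← pow_add, ← pow_add, Nat.div_add_mod,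
              mul_comm D M]
        _ ≤ η * 1 := norm_mul_le_of_le ((dist_eq_norm _ _).ge.trans (hM _ hle).le) (ha _)
        _ = η := mul_one η

theorem exists_reduction_pow_of_mem_rowStochastic (hA : A ∈ rowStochastic ℝ K) {η : ℝ}
    (hη : 0 < η) :
    ∃ (T : ℕ) (red : ℕ → Fin T), (∀ n, red (red n + 1) = red (n + 1)) ∧
      ∀ n, ‖A ^ n - A ^ (red n : ℕ)‖ ≤ η := by
  obtain ⟨D, hD, hsupp⟩ := exists_pos_pow_eq_zero_imp hA
  obtain ⟨E, hE⟩ := exists_tendsto_pow_of_eq_zero_imp (pow_mem hA D) hsupp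
  exact exists_reduction_of_tendsto_pow_pow
    (fun n => linfty_opNorm_le_one_of_mem_rowStochastic (pow_mem hA n)) hD hE hη

end RowStochastic

/-! ### The finite automaton -/

section PowProd

open Function

variable {ι R : Type*}

theorem pairwise_commute_pow [Monoid R] {a : ι → R} (ha : ∀ i j, Commute (a i) (a j)) (s : Set ι)
    (n : ι → ℕ) : s.Pairwise (Commute on fun i => a i ^ n i) :=
  fun i _ j _ _ => (ha i j).pow_pow _ _

variable [Fintype ι]

/-- The product of the powers `a i ^ n i` of a family of commuting elements. -/
def powProd [Monoid R] (a : ι → R) (ha : ∀ i j, Commute (a i) (a j)) (n : ι → ℕ) : R :=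
  Finset.univ.noncommProd (fun i => a i ^ n i) (pairwise_commute_pow ha _ n)

theorem powProd_zero [Monoid R] (a : ι → R) (ha : ∀ i j, Commute (a i) (a j)) :
    powProd a ha (fun _ => 0) = 1 := by
  rw [powProd, Finset.noncommProd_eq_pow_card _ _ _ 1 fun _ _ => pow_zero _, one_pow]

theorem powProd_update_succ [Monoid R] [DecidableEq ι] (a : ι → R)
    (ha : ∀ i j, Commute (a i) (a j)) (n : ι → ℕ) (i : ι) :
    powProd a ha (update n i (n i + 1)) = powProd a ha n * a i := by
  rw [powProd, powProd, ← Finset.noncommProd_erase_mul _ (Finset.mem_univ i) fun j => a j ^ n j,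
    ← Finset.noncommProd_erase_mul _ (Finset.mem_univ i) fun j => a j ^ update n i (n i + 1) j,
    update_self, pow_succ, mul_assoc]
  congr 1
  refine Finset.noncommProd_congr rfl (fun j hj => ?_) _
  rw [update_of_ne (Finset.ne_of_mem_erase hj)]

theorem powProd_mem [Monoid R] {a : ι → R} (ha : ∀ i j, Commute (a i) (a j)) {P : Submonoid R}
    (haP : ∀ i, a i ∈ P) (n : ι → ℕ) : powProd a ha n ∈ P :=
  P.noncommProd_mem _ _ _ fun i _ => pow_mem (haP i) _

variable [NormedRing R] {P : Submonoid R}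

theorem norm_noncommProd_sub_noncommProd_le {ι : Type*} {x y : ι → R} (hP : ∀ z ∈ P, ‖z‖ ≤ 1)
    (hx : ∀ i, x i ∈ P) (hy : ∀ i, y i ∈ P) (s : Finset ι)
    (hxc : (s : Set ι).Pairwise (Commute on x)) (hyc : (s : Set ι).Pairwise (Commute on y)) :
    ‖s.noncommProd x hxc - s.noncommProd y hyc‖ ≤ ∑ i ∈ s, ‖x i - y i‖ := by
  induction s using Finset.cons_induction with
  | empty => rw [Finset.noncommProd_empty, Finset.noncommProd_empty, sub_self, norm_zero,
      Finset.sum_empty]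
  | cons i s hi ih =>
    have hxc' := hxc.mono (Finset.coe_subset.2 (Finset.subset_cons hi))
    have hyc' := hyc.mono (Finset.coe_subset.2 (Finset.subset_cons hi))
    have hprod : s.noncommProd y hyc' ∈ P := P.noncommProd_mem _ _ _ fun i _ => hy i
    rw [Finset.noncommProd_cons, Finset.noncommProd_cons, Finset.sum_cons, add_comm]
    calc ‖x i * s.noncommProd x hxc' - y i * s.noncommProd y hyc'‖
        = ‖x i * (s.noncommProd x hxc' - s.noncommProd y hyc') +
            (x i - y i) * s.noncommProd y hyc'‖ := by
          rw [mul_sub, sub_mul, sub_add_sub_cancel]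
      _ ≤ 1 * (∑ j ∈ s, ‖x j - y j‖) + ‖x i - y i‖ * 1 :=
          norm_add_le_of_le (norm_mul_le_of_le (hP _ (hx i)) (ih hxc' hyc'))
            (norm_mul_le_of_le le_rfl (hP _ hprod))
      _ = ∑ j ∈ s, ‖x j - y j‖ + ‖x i - y i‖ := by rw [one_mul, mul_one]

theorem norm_powProd_sub_powProd_le {a : ι → R} (hP : ∀ z ∈ P, ‖z‖ ≤ 1)
    (ha : ∀ i j, Commute (a i) (a j)) (haP : ∀ i, a i ∈ P) (m n : ι → ℕ) :
    ‖powProd a ha m - powProd a ha n‖ ≤ ∑ i, ‖a i ^ m i - a i ^ n i‖ :=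
  norm_noncommProd_sub_noncommProd_le hP (fun i => pow_mem (haP i) _)
    (fun i => pow_mem (haP i) _) _ _ _

end PowProd

section Reduction

open Function

variable {α : Type*} [DecidableEq α] [BEq α] [LawfulBEq α]

theorem count_append_singleton_eq_update (h : List α) (a : α) :
    (fun b => (h ++ [a]).count b) = update (fun b => h.count b) a (h.count a + 1) := by
  ext b
  obtain rfl | hab := eq_or_ne b a
  · rw [update_self, List.count_append, List.count_singleton_self]
  · rw [update_of_ne hab, List.count_append, List.count_singleton, beq_false_of_ne hab.symm,
      if_neg Bool.false_ne_true, add_zero]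

theorem foldl_update_eq_apply_count {β : α → Type*} (succ : ∀ a, β a → β a) (red : ∀ a, ℕ → β a)
    (hred : ∀ a n, succ a (red a n) = red a (n + 1)) (h : List α) :
    h.foldl (fun s a => update s a (succ a (s a))) (fun a => red a 0) =
      fun a => red a (h.count a) := by
  induction h using List.reverseRecOn with
  | nil => rfl
  | append_singleton h a ih =>
    rw [List.foldl_append, ih, List.foldl_cons, List.foldl_nil, hred]
    ext b
    rw [congrFun (count_append_singleton_eq_update h a) b]
    obtain rfl | hab := eq_or_ne b a
    · rw [update_self, update_self]
    · rw [update_of_ne hab, update_of_ne hab]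

end Reduction

section Automaton

open Function Matrix
open scoped Matrix.Norms.Operator

variable {K I J : Type*} [Fintype K]

theorem vecMul_mem_stdSimplex [DecidableEq K] {A : Matrix K K ℝ} (hA : A ∈ rowStochastic ℝ K)
    {p : K → ℝ} (hp : p ∈ stdSimplex ℝ K) : p ᵥ* A ∈ stdSimplex ℝ K :=
  ⟨nonneg_vecMul_of_mem_rowStochastic hA hp.1, by
    simpa only [dotProduct_one] using
      vecMul_dotProduct_one_eq_one_rowStochastic hA ((dotProduct_one p).trans hp.2)⟩

theorem abs_dotProduct_le_norm_of_mem_stdSimplex {p : K → ℝ} (hp : p ∈ stdSimplex ℝ K)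
    (f : K → ℝ) : |p ⬝ᵥ f| ≤ ‖f‖ :=
  abs_le.2 ⟨le_dotProduct_of_mem_stdSimplex hp fun k => neg_le_of_abs_le (norm_le_pi_norm f k),
    dotProduct_le_of_mem_stdSimplex hp fun k => le_of_abs_le (norm_le_pi_norm f k)⟩

/-- The matrix by which beliefs are multiplied when the pair of actions `a` is played. -/
def transitionMatrix (q : K → I → J → K → ℝ) (a : I × J) : Matrix K K ℝ :=
  Matrix.of fun k k' => q k a.1 a.2 k'

theorem qTilde_eq_vecMul (q : K → I → J → K → ℝ) (p : K → ℝ) (i : I) (j : J) :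
    qTilde q p i j = p ᵥ* transitionMatrix q (i, j) :=
  rfl

theorem commute_transitionMatrix {q : K → I → J → K → ℝ}
    (hcomm : ∀ (k : K) (i i' : I) (j j' : J),
      qTilde q (q k i j) i' j' = qTilde q (q k i' j') i j) (a b : I × J) :
    Commute (transitionMatrix q a) (transitionMatrix q b) :=
  Matrix.ext fun k k' => congrFun (hcomm k a.1 b.1 a.2 b.2) k'

theorem belief_eq_vecMul_powProd [Fintype I] [Fintype J] [DecidableEq K] [DecidableEq I]
    [DecidableEq J] {q : K → I → J → K → ℝ}
    (hq : ∀ a b, Commute (transitionMatrix q a) (transitionMatrix q b)) (p : K → ℝ)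
    (h : List (I × J)) :
    belief q p h = p ᵥ* powProd (transitionMatrix q) hq fun a => h.count a := by
  induction h using List.reverseRecOn with
  | nil => simp only [List.count_nil, powProd_zero, vecMul_one]; rfl
  | append_singleton h a ih =>
    rw [count_append_singleton_eq_update, powProd_update_succ, ← vecMul_vecMul, ← ih,
      belief_append_singleton, qTilde_eq_vecMul]

theorem abs_gTilde_vecMul_sub_le {g : K → I → J → ℝ}
    (hg : ∀ k i j, g k i j ∈ Set.Icc (0 : ℝ) 1) {p : K → ℝ} (hp : p ∈ stdSimplex ℝ K)
    (A B : Matrix K K ℝ) (i : I) (j : J) :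
    |gTilde g (p ᵥ* A) i j - gTilde g (p ᵥ* B) i j| ≤ ‖A - B‖ := by
  set f : K → ℝ := fun k => g k i j
  have hf : ‖f‖ ≤ 1 := (pi_norm_le_iff_of_nonneg zero_le_one).2 fun k =>
    (Real.norm_of_nonneg (hg k i j).1).trans_le (hg k i j).2
  calc |(p ᵥ* A) ⬝ᵥ f - (p ᵥ* B) ⬝ᵥ f| = |p ⬝ᵥ (A - B) *ᵥ f| := by
        rw [← dotProduct_mulVec, ← dotProduct_mulVec, ← dotProduct_sub, ← sub_mulVec]
    _ ≤ ‖(A - B) *ᵥ f‖ := abs_dotProduct_le_norm_of_mem_stdSimplex hp _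
    _ ≤ ‖A - B‖ * 1 := (linfty_opNorm_mulVec _ _).trans (by gcongr)
    _ = ‖A - B‖ := mul_one _

variable {q : K → I → J → K → ℝ} {g : K → I → J → ℝ} {p₁ : K → ℝ}

theorem exists_approximates_of_reduction [Fintype I] [Fintype J] [DecidableEq K]
    (hq : ∀ a, transitionMatrix q a ∈ rowStochastic ℝ K)
    (hqc : ∀ a b, Commute (transitionMatrix q a) (transitionMatrix q b))
    (hg : ∀ k i j, g k i j ∈ Set.Icc (0 : ℝ) 1) (hp₁ : p₁ ∈ stdSimplex ℝ K) {T : I × J → ℕ}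
    {red : ∀ a, ℕ → Fin (T a)} (hred : ∀ a n, red a (red a n + 1) = red a (n + 1)) {η : ℝ}
    (hη : ∀ a n, ‖transitionMatrix q a ^ n - transitionMatrix q a ^ (red a n : ℕ)‖ ≤ η) :
    ∃ G : DeterministicGame (∀ a, Fin (T a)) I J,
      G.Approximates (fun a => red a 0) q g p₁ (Fintype.card (I × J) * η) := by
  classical
  let X := powProd (transitionMatrix q) hqc
  let G : DeterministicGame (∀ a, Fin (T a)) I J :=
    { next s i j := update s (i, j) (red (i, j) (s (i, j) + 1))
      reward s i j := gTilde g (p₁ ᵥ* X fun a => s a) i j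
      reward_mem s i j :=
        have hp := vecMul_mem_stdSimplex (powProd_mem hqc hq fun a => s a) hp₁
        ⟨le_dotProduct_of_mem_stdSimplex hp fun k => (hg k i j).1,
          dotProduct_le_of_mem_stdSimplex hp fun k => (hg k i j).2⟩ }
  have hrun (h : List (I × J)) : G.run (fun a => red a 0) h = fun a => red a (h.count a) :=
    foldl_update_eq_apply_count (fun a t => red a (t + 1)) red hred h
  refine ⟨G, fun h i j => ?_⟩
  rw [hrun, belief_eq_vecMul_powProd hqc]
  calc |gTilde g (p₁ ᵥ* X fun a => h.count a) i j -
          gTilde g (p₁ ᵥ* X fun a => red a (h.count a)) i j|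
      ≤ ‖(X fun a => h.count a) - X fun a => red a (h.count a)‖ :=
        abs_gTilde_vecMul_sub_le hg hp₁ _ _ i j
    _ ≤ ∑ a, ‖transitionMatrix q a ^ h.count a - transitionMatrix q a ^ (red a (h.count a) : ℕ)‖ :=
        norm_powProd_sub_powProd_le (fun _ => linfty_opNorm_le_one_of_mem_rowStochastic) _ hq _ _
    _ ≤ Fintype.card (I × J) * η := by
        rw [← nsmul_eq_mul]
        exact Finset.sum_le_card_nsmul _ _ _ fun a _ => hη a _

theorem exists_approximates [Finite I] [Finite J] (hq : ∀ k i j, q k i j ∈ stdSimplex ℝ K)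
    (hg : ∀ k i j, g k i j ∈ Set.Icc (0 : ℝ) 1)
    (hcomm : ∀ (k : K) (i i' : I) (j j' : J),
      qTilde q (q k i j) i' j' = qTilde q (q k i' j') i j)
    (hp₁ : p₁ ∈ stdSimplex ℝ K) {ε : ℝ} (hε : 0 < ε) :
    ∃ (T : I × J → ℕ) (G : DeterministicGame (∀ a, Fin (T a)) I J) (s₀ : ∀ a, Fin (T a)),
      G.Approximates s₀ q g p₁ ε := by
  classical
  have := Fintype.ofFinite I
  have := Fintype.ofFinite J
  have hA (a : I × J) : transitionMatrix q a ∈ rowStochastic ℝ K :=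
    mem_rowStochastic_iff_sum.2 ⟨fun k => (hq k a.1 a.2).1, fun k => (hq k a.1 a.2).2⟩
  have hη : 0 < ε / (Fintype.card (I × J) + 1) := by positivity
  have hcard : Fintype.card (I × J) * (ε / (Fintype.card (I × J) + 1)) ≤ ε := by
    rw [mul_div_left_comm]
    exact mul_le_of_le_one_right hε.le (div_le_one_of_le₀ (by simp) (by positivity))
  choose T red hred hnear using fun a => exists_reduction_pow_of_mem_rowStochastic (hA a) hη
  obtain ⟨G, hG⟩ := exists_approximates_of_reduction hA (commute_transitionMatrix hcomm) hg hp₁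
    hred hnear
  exact ⟨T, G, _, fun h i j => (hG h i j).trans hcard⟩

end Automaton

/-! ### The uniform value -/

theorem exists_forall_sub_and_add_of_approx {P Q : ℝ → Prop} (hP : ∀ a b, b ≤ a → P a → P b)
    (hQ : ∀ a b, a ≤ b → Q a → Q b) (hPQ : ∀ a b, P a → Q b → a ≤ b)
    (hw : ∀ ε > 0, ∃ w, P (w - ε) ∧ Q (w + ε)) :
    ∃ v, (∀ ε > 0, P (v - ε)) ∧ ∀ ε > 0, Q (v + ε) := by
  obtain ⟨w₀, hPw₀, hQw₀⟩ := hw 1 one_pos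
  have hbdd : BddAbove {a | P a} := ⟨w₀ + 1, fun a ha => hPQ a _ ha hQw₀⟩
  refine ⟨sSup {a | P a}, fun ε hε => ?_, fun ε hε => ?_⟩ <;>
    obtain ⟨w, hPw, hQw⟩ := hw (ε / 2) (half_pos hε)
  · have hle : sSup {a | P a} ≤ w + ε / 2 := csSup_le ⟨_, hPw₀⟩ fun a ha => hPQ a _ ha hQw
    exact hP _ _ (by linarith) hPw
  · have hge : w - ε / 2 ≤ sSup {a | P a} := le_csSup hbdd hPw
    exact hQ _ _ (by linarith) hQw

section UniformValue

variable {K I J : Type*} [Fintype K] [Fintype I] [Fintype J] {q : K → I → J → K → ℝ}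
  {g : K → I → J → ℝ} {p₁ : K → ℝ}

theorem exists_forall_ge_pos_and_le_mul (C : ℝ) {ε : ℝ} (hε : 0 < ε) :
    ∃ N : ℕ, ∀ n ≥ N, 0 < (n : ℝ) ∧ C ≤ n * ε :=
  eventually_atTop.1 ((tendsto_natCast_atTop_atTop.eventually_gt_atTop 0).and
    ((tendsto_natCast_atTop_atTop.atTop_mul_const hε).eventually_ge_atTop C))

theorem GuaranteesAtLeast.exists_le_sbPayoff {w ε : ℝ} (hw : GuaranteesAtLeast q g p₁ w)
    (hε : 0 < ε) : ∃ (σ : List (I × J) → PMF I) (N : ℕ),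
      ∀ (τ : List (I × J) → PMF J), ∀ n ≥ N, w - ε ≤ sbPayoff q g σ τ p₁ n := by
  obtain ⟨σ, C, hσ⟩ := hw
  obtain ⟨N, hN⟩ := exists_forall_ge_pos_and_le_mul C hε
  refine ⟨σ, N, fun τ n hn => ?_⟩
  obtain ⟨hpos, hC⟩ := hN n hn
  rw [sbPayoff, one_div_mul_eq_div, le_div_iff₀ hpos]
  linarith [hσ τ n]

theorem GuaranteesAtMost.exists_sbPayoff_le {w ε : ℝ} (hw : GuaranteesAtMost q g p₁ w)
    (hε : 0 < ε) : ∃ (τ : List (I × J) → PMF J) (N : ℕ),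
      ∀ (σ : List (I × J) → PMF I), ∀ n ≥ N, sbPayoff q g σ τ p₁ n ≤ w + ε := by
  obtain ⟨τ, C, hτ⟩ := hw
  obtain ⟨N, hN⟩ := exists_forall_ge_pos_and_le_mul C hε
  refine ⟨τ, N, fun σ n hn => ?_⟩
  obtain ⟨hpos, hC⟩ := hN n hn
  rw [sbPayoff, one_div_mul_eq_div, div_le_iff₀ hpos]
  linarith [hτ σ n]

theorem GuaranteesAtLeast.le_of_guaranteesAtMost {a b : ℝ} (ha : GuaranteesAtLeast q g p₁ a)
    (hb : GuaranteesAtMost q g p₁ b) : a ≤ b := by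
  refine le_of_forall_pos_le_add fun ε hε => ?_
  obtain ⟨σ, N, hσ⟩ := ha.exists_le_sbPayoff (half_pos hε)
  obtain ⟨τ, M, hτ⟩ := hb.exists_sbPayoff_le (half_pos hε)
  linarith [hσ τ (max N M) (le_max_left _ _), hτ σ (max N M) (le_max_right _ _)]

theorem GuaranteesAtLeast.mono {a b : ℝ} (hab : b ≤ a) :
    GuaranteesAtLeast q g p₁ a → GuaranteesAtLeast q g p₁ b := fun ⟨σ, C, hσ⟩ =>
  ⟨σ, C, fun τ n => (by gcongr : n * b - C ≤ n * a - C).trans (hσ τ n)⟩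

theorem GuaranteesAtMost.mono {a b : ℝ} (hab : a ≤ b) :
    GuaranteesAtMost q g p₁ a → GuaranteesAtMost q g p₁ b := fun ⟨τ, C, hτ⟩ =>
  ⟨τ, C, fun σ n => (hτ σ n).trans (by gcongr)⟩

theorem exists_guaranteesAtLeast_and_guaranteesAtMost [Nonempty I] [Nonempty J]
    (hq : ∀ k i j, q k i j ∈ stdSimplex ℝ K) (hg : ∀ k i j, g k i j ∈ Set.Icc (0 : ℝ) 1)
    (hcomm : ∀ (k : K) (i i' : I) (j j' : J),
      qTilde q (q k i j) i' j' = qTilde q (q k i' j') i j)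
    (hp₁ : p₁ ∈ stdSimplex ℝ K) {ε : ℝ} (hε : 0 < ε) :
    ∃ w, GuaranteesAtLeast q g p₁ (w - ε) ∧ GuaranteesAtMost q g p₁ (w + ε) := by
  obtain ⟨η, hη, hηε⟩ : ∃ η > 0, 4 * η ≤ 1 ∧ 8 * η ≤ ε :=
    ⟨min (1 / 4) (ε / 8), by positivity, by linarith [min_le_left (1 / 4) (ε / 8)],
      by linarith [min_le_right (1 / 4) (ε / 8)]⟩
  obtain ⟨T, G, s₀, hG⟩ := exists_approximates hq hg hcomm hp₁ hη
  obtain ⟨w, hw, hw'⟩ := hG.exists_guarantees hq hp₁ hη hηε.1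
  exact ⟨w, hw.mono (by linarith), hw'.mono (by linarith)⟩

end UniformValue

/-- A commutative state-blind repeated game with finite sets of states and actions has a uniform
value from every initial probability on the states. -/
theorem commutative_state_blind_game_has_uniform_value
    {K I J : Type*} [Fintype K] [Nonempty K] [Fintype I] [Nonempty I] [Fintype J] [Nonempty J]
    (q : K → I → J → K → ℝ) (hq : ∀ k i j, q k i j ∈ stdSimplex ℝ K)
    (g : K → I → J → ℝ) (hg01 : ∀ k i j, g k i j ∈ Set.Icc (0 : ℝ) 1)
    (hcomm : ∀ (k : K) (i i' : I) (j j' : J),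
      qTilde q (q k i j) i' j' = qTilde q (q k i' j') i j)
    (p₁ : K → ℝ) (hp₁ : p₁ ∈ stdSimplex ℝ K) :
    ∃ v : ℝ,
      (∀ ε > (0 : ℝ), ∃ (σ : List (I × J) → PMF I) (N : ℕ),
        ∀ (τ : List (I × J) → PMF J), ∀ n ≥ N, v - ε ≤ sbPayoff q g σ τ p₁ n) ∧
      (∀ ε > (0 : ℝ), ∃ (τ : List (I × J) → PMF J) (N : ℕ),
        ∀ (σ : List (I × J) → PMF I), ∀ n ≥ N, sbPayoff q g σ τ p₁ n ≤ v + ε) := by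
  obtain ⟨v, hv, hv'⟩ := exists_forall_sub_and_add_of_approx (P := GuaranteesAtLeast q g p₁)
    (Q := GuaranteesAtMost q g p₁) (fun _ _ h => .mono h) (fun _ _ h => .mono h)
    (fun _ _ ha hb => ha.le_of_guaranteesAtMost hb)
    (fun _ => exists_guaranteesAtLeast_and_guaranteesAtMost hq hg01 hcomm hp₁)
  refine ⟨v, fun ε hε => ?_, fun ε hε => ?_⟩
  · simpa only [sub_sub, add_halves] using (hv _ (half_pos hε)).exists_le_sbPayoff (half_pos hε)
  · simpa only [add_assoc, add_halves] using (hv' _ (half_pos hε)).exists_sbPayoff_le (half_pos hε)
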